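/- arXiv:2602.21118 — 2 statements merged into one kernel-verified Lean document; each statement's English description precedes it below -/
import Mathlib

section
/- Let 1<p<∞ and N = 2. For n ∈ ℕ, let γ_n(t) = (t, (1+cos t)/(n+1)) for t ∈ (−π,π) and γ_n(t) = (t,0) for |t| ≥ π, let Γ_n be its arc-length reparametrization with Γ_n(0) = γ_n(0), let ν_n(s) be a unit normal to Γ_n, and set Ω_n = {Γ_n(s) + t ν_n(s) : s ∈ ℝ, t ∈ (−1/2,1/2)}. Suppose for each n that L_n > π is chosen so that the bounded open set O_n := Ω_n ∩ ((−L_n,L_n) × ℝ) satisfies λ_{1,p}(O_n) < (π_p)^p. Set Õ_n := Ω_n ∩ ([−L_n,L_n] × ℝ), τ_0 := L_0, τ_n := 2(L_0 + … + L_{n−1}) + L_n for n ≥ 1, and define Ω := ((−∞,0) × (−1/2,1/2)) ∪ ⋃_{n=0}^∞ (Õ_n + τ_n e_1), where e_1 = (1,0). Then: (1) E_p(Ω) = (π_p)^p; and (2) λ_{k,p}^{LS}(Ω) < E_p(Ω) for every k ∈ ℕ\{0}. -/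
open MeasureTheory Filter Topology Metric Set ENNReal
open scoped RealInnerProductSpace

noncomputable section

/-- Euclidean space `ℝ^N`. -/
abbrev EucN (N : ℕ) := EuclideanSpace ℝ (Fin N)

/-- A test function on an open set `Ω ⊆ ℝ^N`: smooth, with compact support contained in `Ω`. -/
def IsTestFun {N : ℕ} (Ω : Set (EucN N)) (φ : EucN N → ℝ) : Prop :=
  ContDiff ℝ (⊤ : ℕ∞) φ ∧ HasCompactSupport φ ∧ tsupport φ ⊆ Ω

/-- Pairs `(u, g)` in `L^q × L^q`, thought of as a function together with its (weak) gradient. -/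
abbrev SobPair (N : ℕ) (q : ℝ≥0∞) :=
  Lp ℝ q (volume : Measure (EucN N)) × Lp (EucN N) q (volume : Measure (EucN N))

/-- A pair given (a.e.) by a test function and its gradient. -/
def IsTestPair {N : ℕ} (q : ℝ≥0∞) (Ω : Set (EucN N)) (w : SobPair N q) : Prop :=
  ∃ ψ : EucN N → ℝ, IsTestFun Ω ψ ∧ (⇑w.1 =ᵐ[volume] ψ) ∧
    (⇑w.2 =ᵐ[volume] fun x => gradient ψ x)

theorem fact_one_le_ofReal {p : ℝ} (hp : 1 ≤ p) : Fact (1 ≤ ENNReal.ofReal p) :=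
  ⟨ENNReal.one_le_ofReal.mpr hp⟩

/-- The Sobolev space `W^{1,p}_0(Ω)`, realized as the closure in `L^p × L^p` of the set of
pairs (test function, its gradient). -/
def W10 (N : ℕ) (p : ℝ) (hp : 1 ≤ p) (Ω : Set (EucN N)) :
    Set (SobPair N (ENNReal.ofReal p)) :=
  letI := fact_one_le_ofReal hp
  closure {w | IsTestPair (ENNReal.ofReal p) Ω w}

/-- The first eigenvalue `λ_{1,p}(Ω)` (as an extended real, `∞` if there are no admissible
functions). -/
def lambda1p (N : ℕ) (p : ℝ) (hp : 1 ≤ p) (Ω : Set (EucN N)) : ℝ≥0∞ :=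
  sInf {t | ∃ w ∈ W10 N p hp Ω, (∫ x, |w.1 x| ^ p) = 1 ∧
    t = ENNReal.ofReal (∫ x, ‖w.2 x‖ ^ p)}

/-- The `L^p` Poincaré constant "at infinity" `E_p(Ω)`. -/
def Einfty (N : ℕ) (p : ℝ) (hp : 1 ≤ p) (Ω : Set (EucN N)) : ℝ≥0∞ :=
  ⨆ R ∈ Set.Ioi (0 : ℝ), lambda1p N p hp (Ω \ closure (ball (0 : EucN N) R))

/-- There is a continuous odd map from `A` to the unit sphere `S^{j-1} ⊆ ℝ^j`. -/
def HasOddMapToSphere {Z : Type*} [NormedAddCommGroup Z] (A : Set Z) (j : ℕ) : Prop :=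
  ∃ f : Z → EuclideanSpace ℝ (Fin j),
    ContinuousOn f A ∧ (∀ x ∈ A, ‖f x‖ = 1) ∧ ∀ x ∈ A, f (-x) = -f x

/-- The Krasnosel'skii genus of `A` is at least `k`. -/
def genusGE {Z : Type*} [NormedAddCommGroup Z] (A : Set Z) (k : ℕ) : Prop :=
  ∀ j : ℕ, HasOddMapToSphere A j → k ≤ j

/-- The Krasnosel'skii genus of `A`, valued in `ℕ∞`. -/
def genus {Z : Type*} [NormedAddCommGroup Z] (A : Set Z) : ℕ∞ :=
  sInf {k : ℕ∞ | ∃ j : ℕ, (j : ℕ∞) = k ∧ HasOddMapToSphere A j}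

/-- The class `𝒲_{k,p}(Ω)` of compact symmetric subsets of `S_p(Ω) ∩ W^{1,p}_0(Ω)` with
genus at least `k`. -/
def SobClass (N : ℕ) (p : ℝ) (hp : 1 ≤ p) (Ω : Set (EucN N)) (k : ℕ) :
    Set (Set (SobPair N (ENNReal.ofReal p))) :=
  letI := fact_one_le_ofReal hp
  {K | K ⊆ W10 N p hp Ω ∧ (∀ w ∈ K, (∫ x, |w.1 x| ^ p) = 1) ∧
       (∀ w ∈ K, -w ∈ K) ∧ IsCompact K ∧ genusGE K k}

/-- The `k`-th minmax Ljusternik–Schnirelmann value `λ_{k,p}^{LS}(Ω)`. -/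
def lambdaLS (N : ℕ) (p : ℝ) (hp : 1 ≤ p) (Ω : Set (EucN N)) (k : ℕ) : ℝ≥0∞ :=
  ⨅ K ∈ SobClass N p hp Ω k, ⨆ w ∈ K, ENNReal.ofReal (∫ x, ‖w.2 x‖ ^ p)

/-- `w = (u, ∇u)` is an eigenfunction of the Dirichlet `p`-Laplacian on `Ω` associated to the
eigenvalue `lam`. -/
def IsEigenfunction (N : ℕ) (p : ℝ) (hp : 1 ≤ p) (Ω : Set (EucN N)) (lam : ℝ)
    (w : SobPair N (ENNReal.ofReal p)) : Prop :=
  w ∈ W10 N p hp Ω ∧ w ≠ 0 ∧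
  ∀ φ : EucN N → ℝ, IsTestFun Ω φ →
    (∫ x, ‖w.2 x‖ ^ (p - 2) * ⟪w.2 x, gradient φ x⟫) =
      lam * ∫ x, |w.1 x| ^ (p - 2) * (w.1 x) * φ x

/-- `lam` is an eigenvalue of the Dirichlet `p`-Laplacian on `Ω`. -/
def IsEigenvalue (N : ℕ) (p : ℝ) (hp : 1 ≤ p) (Ω : Set (EucN N)) (lam : ℝ) : Prop :=
  ∃ w, IsEigenfunction N p hp Ω lam w

/-- `v = (v, ∇v)` is a non-negative weak subsolution of `-Δ_p u = lam · u^{p-1}` in `Ω`. -/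
def IsSubsolution (N : ℕ) (p : ℝ) (hp : 1 ≤ p) (Ω : Set (EucN N)) (lam : ℝ)
    (v : SobPair N (ENNReal.ofReal p)) : Prop :=
  v ∈ W10 N p hp Ω ∧ (∀ᵐ x, 0 ≤ v.1 x) ∧
  ∀ φ ∈ W10 N p hp Ω, (∀ᵐ x, 0 ≤ φ.1 x) →
    (∫ x, ‖v.2 x‖ ^ (p - 2) * ⟪v.2 x, φ.2 x⟫) ≤ lam * ∫ x, (v.1 x) ^ (p - 1) * φ.1 x

/-- A strongly confining potential. -/
def StronglyConfining (N : ℕ) (V : EucN N → ℝ) : Prop :=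
  LocallyIntegrable V volume ∧ (∀ᵐ x, 0 ≤ V x) ∧
  ∃ α : ℝ → ℝ, (∀ R > (0 : ℝ), 0 < α R) ∧ MonotoneOn α (Set.Ioi 0) ∧
    Tendsto α atTop atTop ∧
    ∀ R > (0 : ℝ), ∀ᵐ x, x ∉ ball (0 : EucN N) R → α R ≤ V x

/-- Triples `(u, g, h)` in `L^q × L^q × L^q`; `h` plays the role of `V^{1/p} u` in the weighted
Sobolev space. -/
abbrev SobTriple (N : ℕ) (q : ℝ≥0∞) :=
  Lp ℝ q (volume : Measure (EucN N)) × Lp (EucN N) q (volume : Measure (EucN N)) ×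
    Lp ℝ q (volume : Measure (EucN N))

/-- A triple given (a.e.) by a test function, its gradient, and `V^{1/p}` times it. -/
def IsTestTriple {N : ℕ} (q : ℝ≥0∞) (p : ℝ) (Ω : Set (EucN N)) (V : EucN N → ℝ)
    (w : SobTriple N q) : Prop :=
  ∃ ψ : EucN N → ℝ, IsTestFun Ω ψ ∧ (⇑w.1 =ᵐ[volume] ψ) ∧
    (⇑w.2.1 =ᵐ[volume] fun x => gradient ψ x) ∧
    (⇑w.2.2 =ᵐ[volume] fun x => (V x) ^ (1/p) * ψ x)

/-- The weighted Sobolev space `W^{1,p}_0(Ω; V)`, realized as a closure of triples coming from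
test functions; the norm topology of `L^p × L^p × L^p` on such triples corresponds exactly to
the weighted Sobolev norm `(∫|∇u|^p + ∫(1+V)|u|^p)^{1/p}`. -/
def W10V (N : ℕ) (p : ℝ) (hp : 1 ≤ p) (Ω : Set (EucN N)) (V : EucN N → ℝ) :
    Set (SobTriple N (ENNReal.ofReal p)) :=
  letI := fact_one_le_ofReal hp
  closure {w | IsTestTriple (ENNReal.ofReal p) p Ω V w}

/-- The class `𝒲_{k,p}(Ω; V)` for the weighted space. -/
def SobClassV (N : ℕ) (p : ℝ) (hp : 1 ≤ p) (Ω : Set (EucN N)) (V : EucN N → ℝ) (k : ℕ) :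
    Set (Set (SobTriple N (ENNReal.ofReal p))) :=
  letI := fact_one_le_ofReal hp
  {K | K ⊆ W10V N p hp Ω V ∧ (∀ w ∈ K, (∫ x, |w.1 x| ^ p) = 1) ∧
       (∀ w ∈ K, -w ∈ K) ∧ IsCompact K ∧ genusGE K k}

/-- The perturbed minmax value `λ_{k,p}^{LS}(Ω; ε V)`, for the functional
`G(φ) = ∫|∇φ|^p + ε ∫ V |φ|^p`. -/
def lambdaLSV (N : ℕ) (p : ℝ) (hp : 1 ≤ p) (Ω : Set (EucN N)) (V : EucN N → ℝ)
    (ε : ℝ) (k : ℕ) : ℝ≥0∞ :=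
  ⨅ K ∈ SobClassV N p hp Ω V k, ⨆ w ∈ K,
    ENNReal.ofReal ((∫ x, ‖w.2.1 x‖ ^ p) + ε * ∫ x, |w.2.2 x| ^ p)

/-- `w` is a constrained critical point, at level `lam`, of the perturbed functional
`G(φ) = ∫|∇φ|^p + ε ∫ V |φ|^p` on the unit sphere of `L^p`. -/
def IsCriticalV (N : ℕ) (p : ℝ) (hp : 1 ≤ p) (Ω : Set (EucN N)) (V : EucN N → ℝ)
    (ε : ℝ) (lam : ℝ) (w : SobTriple N (ENNReal.ofReal p)) : Prop :=
  w ∈ W10V N p hp Ω V ∧ (∫ x, |w.1 x| ^ p) = 1 ∧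
  ∀ φ : EucN N → ℝ, IsTestFun Ω φ →
    (∫ x, ‖w.2.1 x‖ ^ (p - 2) * ⟪w.2.1 x, gradient φ x⟫)
      + ε * ∫ x, V x * |w.1 x| ^ (p - 2) * (w.1 x) * φ x
    = lam * ∫ x, |w.1 x| ^ (p - 2) * (w.1 x) * φ x

/-- The embedding `W^{1,p}_0(Ω) ↪ L^p(Ω)` is compact: every bounded sequence in `W^{1,p}_0(Ω)`
has a subsequence converging strongly in `L^p`. -/
def CompactSobolevEmbedding (N : ℕ) (p : ℝ) (hp : 1 ≤ p) (Ω : Set (EucN N)) : Prop :=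
  ∀ w : ℕ → SobPair N (ENNReal.ofReal p), (∀ n, w n ∈ W10 N p hp Ω) →
    (∃ M : ℝ≥0∞, M ≠ ⊤ ∧ ∀ n, eLpNorm (⇑(w n).1) (ENNReal.ofReal p) volume ≤ M ∧
        eLpNorm (⇑(w n).2) (ENNReal.ofReal p) volume ≤ M) →
    ∃ σ : ℕ → ℕ, StrictMono σ ∧ ∃ u : EucN N → ℝ, MemLp u (ENNReal.ofReal p) volume ∧
      Tendsto (fun n => eLpNorm (⇑(w (σ n)).1 - u) (ENNReal.ofReal p) volume) atTop (𝓝 0)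


/-- A point of `ℝ²` from its two coordinates. -/
noncomputable def pt2 (a b : ℝ) : EucN 2 := (EuclideanSpace.equiv (Fin 2) ℝ).symm ![a, b]

/-- The curve `γ_n` generating the "infinite whip". -/
noncomputable def whipCurve (n : ℕ) (t : ℝ) : EucN 2 :=
  if |t| < Real.pi then pt2 t ((1 + Real.cos t) / (n + 1)) else pt2 t 0



namespace BU

/-- coboundary of a cochain on lists (mod 2) -/
def d {X : Type*} : (List X → ZMod 2) → List X → ZMod 2
  | _, [] => 0
  | φ, x :: l => φ l + d (fun m => φ (x :: m)) l

/-- pairing of cochains with chains (lists of lists) -/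
def pair {X : Type*} (φ : List X → ZMod 2) (h : List (List X)) : ZMod 2 := (h.map φ).sum

/-- prism operator between two maps -/
def prism {X : Type*} (g g' : X → X) : List X → List (List X)
  | [] => []
  | x :: l => (g x :: g' x :: l.map g') :: (prism g g' l).map (List.cons (g x))

theorem two_self (a : ZMod 2) : a + a = 0 := CharTwo.add_self_eq_zero a

theorem pair_nil {X : Type*} (φ : List X → ZMod 2) : pair φ [] = 0 := rfl

theorem pair_cons {X : Type*} (φ : List X → ZMod 2) (l) (h) :
    pair φ (l :: h) = φ l + pair φ h := by simp [pair]

theorem pair_append {X : Type*} (φ : List X → ZMod 2) (h h') :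
    pair φ (h ++ h') = pair φ h + pair φ h' := by simp [pair]

theorem pair_map {X : Type*} (φ : List X → ZMod 2) (f : List X → List X) (h) :
    pair φ (h.map f) = pair (fun l => φ (f l)) h := by
  simp [pair, Function.comp_def]

theorem pair_add {X : Type*} (φ ψ : List X → ZMod 2) (h) :
    pair (fun l => φ l + ψ l) h = pair φ h + pair ψ h := by
  induction h with
  | nil => simp [pair]
  | cons l h ih => simp only [pair_cons, ih]; ring

theorem pair_congr {X : Type*} {φ ψ : List X → ZMod 2} {h : List (List X)}
    (H : ∀ l ∈ h, φ l = ψ l) : pair φ h = pair ψ h := by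
  unfold pair
  rw [List.map_congr_left H]

theorem pair_flatMap {X : Type*} (φ : List X → ZMod 2) (f : List X → List (List X)) (h) :
    pair φ (h.flatMap f) = pair (fun l => pair φ (f l)) h := by
  induction h with
  | nil => simp [pair]
  | cons l h ih => simp only [List.flatMap_cons, pair_append, ih, pair_cons]

theorem d_add {X : Type*} (l : List X) : ∀ φ ψ : List X → ZMod 2,
    d (fun m => φ m + ψ m) l = d φ l + d ψ l := by
  induction l with
  | nil => intro φ ψ; simp [d]
  | cons x l ih => intro φ ψ; simp only [d, ih]; ring

theorem d_map {X : Type*} (g : X → X) (l : List X) : ∀ φ : List X → ZMod 2,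
    d (fun m => φ (m.map g)) l = d φ (l.map g) := by
  induction l with
  | nil => intro φ; simp [d]
  | cons x l ih =>
    intro φ
    simp only [d, List.map_cons]
    rw [ih (fun m => φ (g x :: m))]

theorem prism_homotopy {X : Type*} (g g' : X → X) (l : List X) : ∀ φ : List X → ZMod 2,
    pair (d φ) (prism g g' l) + d (fun m => pair φ (prism g g' m)) l
      = φ (l.map g) + φ (l.map g') := by
  induction l with
  | nil => intro φ; simp [d, prism, pair, two_self]
  | cons x l ih =>
    intro φ
    have e := ih (fun m => φ (g x :: m))
    simp only [prism, pair_cons, pair_map, d, pair_add, d_add, List.map_cons]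
    rw [d_map g' l (fun m => φ (g x :: g' x :: m))]
    have t1 := two_self (pair φ (prism g g' l))
    have t2 := two_self (d (fun m => φ (g x :: g' x :: m)) (l.map g'))
    have t3 := two_self (φ (g x :: l.map g'))
    linear_combination e + t1 + t2 + t3

/-- the product cochain -/
def W {X : Type*} (s : ℕ → X → ZMod 2) : List X → ZMod 2
  | [] => 0
  | [_] => 1
  | x :: y :: l => (s l.length x + s l.length y) * W s (y :: l)

def θ {X : Type*} (s : ℕ → X → ZMod 2) : List X → ZMod 2
  | [] => 0
  | x :: l => s l.length x * W s (x :: l)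

theorem d_congr_len {X : Type*} (l : List X) : ∀ φ ψ : List X → ZMod 2,
    (∀ m : List X, m.length + 1 = l.length → φ m = ψ m) → d φ l = d ψ l := by
  induction l with
  | nil => intro φ ψ _; rfl
  | cons x l ih =>
    intro φ ψ H
    simp only [d]
    rw [H l (by simp), ih (fun m => φ (x :: m)) (fun m => ψ (x :: m))]
    intro m hm
    exact H _ (by simp; omega)

theorem d_smul {X : Type*} (l : List X) (c : ZMod 2) : ∀ φ : List X → ZMod 2,
    d (fun m => c * φ m) l = c * d φ l := by
  induction l with
  | nil => intro φ; simp [d]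
  | cons x l ih => intro φ; simp only [d, ih]; ring

theorem d_W {X : Type*} (s : ℕ → X → ZMod 2) (l : List X) : d (W s) l = 0 := by
  induction l with
  | nil => rfl
  | cons y l ih =>
    cases l with
    | nil => simp [d, W]
    | cons z l =>
      clear ih
      induction l generalizing y z with
      | nil => simp [d, W, two_self]
      | cons u l ih =>
        have e := ih z u
        -- y z u l
        have k : d (fun m => W s (y :: z :: m)) (u :: l)
            = d (fun m => (s l.length y + s l.length z) * W s (z :: m)) (u :: l) := by
          apply d_congr_len
          intro m hm
          have : m.length = l.length := by simpa using hm
          simp [W, this]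
        rw [d_smul] at k
        have e' : d (fun m => W s (z :: m)) (u :: l) = W s (u :: l) := by
          have t := two_self (W s (u :: l))
          rw [d] at e
          linear_combination e - t
        rw [e'] at k
        rw [d, d, k]
        simp only [W]
        have t := two_self (s l.length y * W s (u :: l))
        have t2 := two_self (s l.length z * W s (u :: l))
        have t3 := two_self (s l.length u * W s (u :: l))
        linear_combination t + t2 + t3

theorem d_θ {X : Type*} (s : ℕ → X → ZMod 2) (x y : X) (l : List X) :
    d (θ s) (x :: y :: l) = W s (x :: y :: l) := by
  have k : d (fun m => θ s (x :: m)) (y :: l)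
      = d (fun m => s l.length x * W s (x :: m)) (y :: l) := by
    apply d_congr_len
    intro m hm
    have : m.length = l.length := by simpa using hm
    simp [θ, this]
  rw [d_smul] at k
  have e := d_W s (x :: y :: l)
  rw [d] at e
  rw [d, k]
  simp only [θ, W]
  have t := two_self (W s (y :: l))
  linear_combination (s l.length x) * e - s l.length x * t

theorem W_map {X : Type*} (s : ℕ → X → ZMod 2) (T : X → X) : ∀ l : List X,
    (∀ i, ∀ x ∈ l, s i (T x) = s i x + 1) → W s (l.map T) = W s l
  | [], _ => rfl
  | [_], _ => rfl
  | x :: y :: l, H => by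
    have ih := W_map s T (y :: l) (fun i x hx => H i x (List.mem_cons_of_mem _ hx))
    simp only [List.map_cons] at ih
    simp only [List.map_cons, W, ih, List.length_map]
    rw [H _ x (by simp), H _ y (by simp)]
    have t := two_self (1 : ZMod 2)
    linear_combination (W s (y :: l)) * t

theorem θ_map {X : Type*} (s : ℕ → X → ZMod 2) (T : X → X) (l : List X)
    (H : ∀ i, ∀ x ∈ l, s i (T x) = s i x + 1) :
    θ s l + θ s (l.map T) = W s l := by
  cases l with
  | nil => simp [θ, W]
  | cons x l =>
    have := W_map s T (x :: l) H
    simp only [List.map_cons] at this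
    simp only [List.map_cons, θ, this, List.length_map]
    rw [H _ x (by simp)]
    have t := two_self (s l.length x * W s (x :: l))
    linear_combination t

theorem W_ne {X : Type*} (s : ℕ → X → ZMod 2) : ∀ l : List X, W s l ≠ 0 →
    ∀ i, i + 1 < l.length → ∃ x ∈ l, ∃ y ∈ l, s i x ≠ s i y
  | [], h, _, _ => by simp [W] at h
  | [_], _, i, hi => by simp at hi
  | x :: y :: l, h, i, hi => by
    simp only [W] at h
    by_cases hil : i = l.length
    · refine ⟨x, by simp, y, by simp, fun e => h ?_⟩
      subst hil
      rw [e, two_self, zero_mul]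
    · obtain ⟨a, ha, b, hb, hab⟩ := W_ne s (y :: l) (right_ne_zero_of_mul h) i
        (by simp at hi ⊢; omega)
      exact ⟨a, List.mem_cons_of_mem _ ha, b, List.mem_cons_of_mem _ hb, hab⟩

theorem mem_prism_len {X : Type*} (g g' : X → X) : ∀ (l : List X), ∀ m ∈ prism g g' l,
    m.length = l.length + 1 ∧ ∀ x ∈ m, ∃ y ∈ l, x = g y ∨ x = g' y
  | [], m, hm => by simp [prism] at hm
  | a :: l, m, hm => by
    simp only [prism, List.mem_cons, List.mem_map] at hm
    rcases hm with rfl | ⟨m', hm', rfl⟩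
    · refine ⟨by simp, ?_⟩
      intro x hx
      simp only [List.mem_cons, List.mem_map] at hx
      rcases hx with rfl | rfl | ⟨y, hy, rfl⟩
      · exact ⟨a, by simp, Or.inl rfl⟩
      · exact ⟨a, by simp, Or.inr rfl⟩
      · exact ⟨y, by simp [hy], Or.inr rfl⟩
    · obtain ⟨h1, h2⟩ := mem_prism_len g g' l m' hm'
      refine ⟨by simp [h1], ?_⟩
      intro x hx
      rcases List.mem_cons.1 hx with rfl | hx
      · exact ⟨a, by simp, Or.inl rfl⟩
      · obtain ⟨y, hy, h⟩ := h2 x hx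
        exact ⟨y, by simp [hy], h⟩

/-- iterated prism -/
def fill {X : Type*} (g : ℕ → X → X) (z : List (List X)) : ℕ → List (List X)
  | 0 => []
  | N + 1 => fill g z N ++ z.flatMap (prism (g N) (g (N + 1)))

theorem fill_bdry {X : Type*} (g : ℕ → X → X) (z : List (List X))
    (hz : ∀ φ, pair (d φ) z = 0) (N : ℕ) (φ : List X → ZMod 2) :
    pair (d φ) (fill g z N) = pair φ (z.map (List.map (g 0))) + pair φ (z.map (List.map (g N))) := by
  induction N with
  | zero => simp [fill, pair_nil, two_self]
  | succ N ih =>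
    rw [fill, pair_append, ih, pair_flatMap]
    have e : pair (fun l => pair (d φ) (prism (g N) (g (N+1)) l)) z =
        pair (fun l => φ (l.map (g N)) + φ (l.map (g (N+1)))) z := by
      have := hz (fun m => pair φ (prism (g N) (g (N+1)) m))
      rw [← pair_congr (fun l _ => prism_homotopy (g N) (g (N+1)) l φ), pair_add, this, add_zero]
    rw [e, pair_add]
    simp only [pair_map]
    have t := two_self (pair (fun l => φ (l.map (g N))) z)
    linear_combination t

theorem mem_fill {X : Type*} (g : ℕ → X → X) (z : List (List X)) (N : ℕ) (m : List X)
    (hm : m ∈ fill g z N) : ∃ i < N, ∃ l ∈ z, m ∈ prism (g i) (g (i + 1)) l := by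
  induction N with
  | zero => simp [fill] at hm
  | succ N ih =>
    rw [fill, List.mem_append, List.mem_flatMap] at hm
    rcases hm with hm | ⟨l, hl, h⟩
    · obtain ⟨i, hi, r⟩ := ih hm
      exact ⟨i, by omega, r⟩
    · exact ⟨N, by omega, l, hl, h⟩

/-- the coordinate sphere in the l1 norm -/
def Sph (n m : ℕ) : Set (Fin n → ℝ) := {a | ∑ i, |a i| = 1 ∧ ∀ i : Fin n, m ≤ i → a i = 0}

theorem tower (n : ℕ) (s : ℕ → (Fin n → ℝ) → ZMod 2)
    (hs : ∀ i, ∀ x : Fin n → ℝ, x ≠ 0 → s i (-x) = s i x + 1) (m : ℕ) (hm : m + 1 ≤ n) :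
    ∀ δ > (0:ℝ), ∃ h : List (List (Fin n → ℝ)),
      (∀ l ∈ h, l.length = m + 1 ∧ (∀ x ∈ l, x ∈ Sph n (m + 1)) ∧
        ∀ x ∈ l, ∀ y ∈ l, dist x y < δ) ∧
      (∀ φ, pair (d φ) (h ++ h.map (List.map (fun x => -x))) = 0) ∧ pair (W s) h = 1 := by
  induction m with
  | zero =>
    intro δ hδ
    refine ⟨[[Pi.single ⟨0, hm⟩ 1]], ?_, ?_, ?_⟩
    · intro l hl
      simp only [List.mem_singleton] at hl
      subst hl
      refine ⟨rfl, ?_, ?_⟩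
      · intro x hx
        simp only [List.mem_singleton] at hx
        subst hx
        constructor
        · rw [Finset.sum_eq_single ⟨0, hm⟩] <;> simp
          intro b hb
          rw [Pi.single_eq_of_ne hb]
        · intro i hi
          rw [Pi.single_eq_of_ne]
          intro h
          rw [h] at hi
          simp at hi
      · intro x hx y hy
        simp only [List.mem_singleton] at hx hy
        subst hx hy
        simpa
    · intro φ
      simp [pair, d, two_self]
    · simp [pair, W]
  | succ m ih =>
    intro δ hδ
    obtain ⟨N, hN⟩ := exists_nat_gt (4 / δ)
    have hN0 : (0:ℝ) < N := lt_trans (by positivity) hN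
    obtain ⟨h, h1, h2, h3⟩ := ih (by omega) (δ / 2) (by positivity)
    set e : Fin n → ℝ := Pi.single ⟨m + 1, hm⟩ 1 with he
    set g : ℕ → (Fin n → ℝ) → (Fin n → ℝ) := fun i x =>
      (1 - (i:ℝ) / N) • x + ((i:ℝ) / N) • e with hg
    set z := h ++ h.map (List.map (fun x => -x)) with hzdef
    have hz : ∀ l ∈ z, l.length = m + 1 ∧ (∀ x ∈ l, x ∈ Sph n (m + 1)) ∧
        ∀ x ∈ l, ∀ y ∈ l, dist x y < δ / 2 := by
      intro l hl
      rw [hzdef, List.mem_append, List.mem_map] at hl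
      rcases hl with hl | ⟨l, hl, rfl⟩
      · exact h1 l hl
      · obtain ⟨a1, a2, a3⟩ := h1 l hl
        refine ⟨by simp [a1], ?_, ?_⟩
        · intro x hx
          obtain ⟨y, hy, rfl⟩ := List.mem_map.1 hx
          obtain ⟨b1, b2⟩ := a2 y hy
          exact ⟨by simpa using b1, fun i hi => by simp [b2 i hi]⟩
        · intro x hx y hy
          obtain ⟨x, hx', rfl⟩ := List.mem_map.1 hx
          obtain ⟨y, hy', rfl⟩ := List.mem_map.1 hy
          rw [dist_neg_neg]
          exact a3 x hx' y hy'
    have hbd : ∀ φ, pair (d φ) (fill g z N) = pair φ h + pair (fun l => φ (l.map (fun x => -x))) h := by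
      intro φ
      rw [fill_bdry g z h2]
      have e0 : g 0 = id := by
        funext x; simp [hg]
      have eN : g N = fun _ => e := by
        funext x
        have : (N:ℝ) / N = 1 := div_self hN0.ne'
        simp only [hg, this]; simp
      rw [e0, eN]
      simp only [List.map_id_fun, List.map_id]
      simp only [hzdef, List.map_append, pair_append, pair_map]
      have : ∀ l : List (Fin n → ℝ), List.map (fun _ => e) (List.map (fun x => -x) l)
          = List.map (fun _ => e) l := by
        intro l; rw [List.map_map]; rfl
      simp only [this, two_self, add_zero]
    have hlen : ∀ l ∈ fill g z N, l.length = m + 1 + 1 ∧ (∀ x ∈ l, x ∈ Sph n (m + 1 + 1)) ∧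
        ∀ x ∈ l, ∀ y ∈ l, dist x y < δ := by
      intro l hl
      obtain ⟨i, hi, l', hl', hll'⟩ := mem_fill g z N l hl
      obtain ⟨a1, a2⟩ := mem_prism_len _ _ l' l hll'
      obtain ⟨c1, c2, c3⟩ := hz l' hl'
      have hiN : ((i+1 : ℕ):ℝ) / N ≤ 1 := by
        rw [div_le_one hN0]; exact_mod_cast hi
      have hiN' : ((i : ℕ):ℝ) / N ≤ 1 := by
        rw [div_le_one hN0]; exact_mod_cast hi.le
      have key : ∀ j : ℕ, (j:ℝ)/N ≤ 1 → ∀ y ∈ l', g j y ∈ Sph n (m+1+1) := by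
        intro j hj y hy
        obtain ⟨b1, b2⟩ := c2 y hy
        have hj0 : (0:ℝ) ≤ (j:ℝ)/N := by positivity
        have hpt : ∀ i, |g j y i| = (1 - (j:ℝ)/N) * |y i| + ((j:ℝ)/N) * |e i| := by
          intro i
          simp only [hg, Pi.add_apply, Pi.smul_apply, smul_eq_mul]
          by_cases hi : i = ⟨m+1, hm⟩
          · rw [b2 i (by simp [hi])]
            simp [abs_mul, abs_of_nonneg hj0]
          · have : e i = 0 := by rw [he, Pi.single_eq_of_ne hi]
            rw [this]
            simp only [mul_zero, add_zero, abs_zero, abs_mul]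
            rw [abs_of_nonneg (by linarith)]
        constructor
        · simp only [hpt]
          rw [Finset.sum_add_distrib, ← Finset.mul_sum, ← Finset.mul_sum, b1]
          have : ∑ i, |e i| = 1 := by
            rw [Finset.sum_eq_single ⟨m+1, hm⟩]
            · simp [he]
            · intro b _ hb
              rw [he, Pi.single_eq_of_ne hb]; simp
            · simp
          rw [this]; ring
        · intro i hi
          simp only [hg, Pi.add_apply, Pi.smul_apply, smul_eq_mul]
          rw [b2 i (by omega), he, Pi.single_eq_of_ne]
          · simp
          · intro h; rw [h] at hi; simp at hi
      have same : ∀ j : ℕ, (j:ℝ)/N ≤ 1 → ∀ x ∈ l', ∀ y ∈ l', dist (g j x) (g j y) < δ / 2 := by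
        intro j hj x hx y hy
        have hj0 : (0:ℝ) ≤ (j:ℝ)/N := by positivity
        simp only [hg]
        rw [dist_add_right, dist_smul₀, Real.norm_eq_abs, abs_of_nonneg (by linarith)]
        have := c3 x hx y hy
        have := dist_nonneg (x := x) (y := y)
        nlinarith
      have nb : ∀ y ∈ l', dist (g i y) (g (i+1) y) < δ / 2 := by
        intro y hy
        have : g i y - g (i+1) y = (1/(N:ℝ)) • (y - e) := by
          simp only [hg]
          push_cast
          rw [add_div]
          module
        rw [dist_eq_norm, this, norm_smul, Real.norm_eq_abs, abs_of_pos (by positivity)]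
        have hle : ∀ x : Fin n → ℝ, ∑ i, |x i| = 1 → ‖x‖ ≤ 1 := by
          intro x hx
          rw [pi_norm_le_iff_of_nonneg zero_le_one]
          intro i
          rw [← hx]
          exact Finset.single_le_sum (f := fun i => |x i|) (fun i _ => abs_nonneg _) (Finset.mem_univ i)
        have he1 : ‖e‖ ≤ 1 := by
          rw [pi_norm_le_iff_of_nonneg zero_le_one]
          intro i
          by_cases hi : i = ⟨m+1, hm⟩
          · rw [hi, he]; simp
          · rw [he, Pi.single_eq_of_ne hi]; simp
        have h2' : ‖y - e‖ ≤ 2 := by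
          have := norm_sub_le y e
          have := hle y (c2 y hy).1
          linarith
        have : 1 / (N:ℝ) * ‖y - e‖ ≤ 1 / N * 2 := by gcongr
        refine lt_of_le_of_lt this ?_
        rw [div_lt_iff₀ hδ] at hN
        rw [one_div, inv_mul_eq_div, div_lt_iff₀ hN0]
        linarith
      refine ⟨by rw [a1, c1], ?_, ?_⟩
      · intro x hx
        obtain ⟨y, hy, rfl | rfl⟩ := a2 x hx
        · exact key i hiN' y hy
        · exact key (i+1) hiN y hy
      · intro x hx y hy
        obtain ⟨x, hx', rfl | rfl⟩ := a2 x hx <;> obtain ⟨y, hy', rfl | rfl⟩ := a2 y hy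
        · have := same i hiN' x hx' y hy'; linarith
        · have := same i hiN' x hx' y hy'
          have := nb y hy'
          have := dist_triangle (g i x) (g i y) (g (i+1) y)
          linarith
        · have := same i hiN' x hx' y hy'
          have := nb x hx'
          have := dist_triangle_left (g (i+1) x) (g i y) (g i x)
          linarith
        · have := same (i+1) hiN x hx' y hy'; linarith
    refine ⟨fill g z N, hlen, ?_, ?_⟩
    · intro φ
      rw [pair_append, pair_map]
      have : (fun l => d φ (List.map (fun x => -x) l))
          = d (fun l => φ (List.map (fun x => -x) l)) := by
        funext l
        rw [d_map]
      rw [this, hbd, hbd]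
      have : ∀ l : List (Fin n → ℝ), List.map (fun x => -x) (List.map (fun x => -x) l) = l := by
        intro l; simp
      simp only [this]
      have t := two_self (pair φ h + pair (fun l => φ (l.map (fun x => -x))) h)
      linear_combination t
    · have hW : pair (W s) (fill g z N) = pair (d (θ s)) (fill g z N) := by
        apply pair_congr
        intro l hl
        have := (hlen l hl).1
        match l, this with
        | x :: y :: l, _ => exact (d_θ s x y l).symm
      rw [hW, hbd, ← pair_add, ← h3]
      apply pair_congr
      intro l hl
      apply θ_map
      intro i x hx
      apply hs
      rintro rfl
      have := ((h1 l hl).2.1 0 hx).1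
      simp at this

/-- Borsuk-Ulam on the l1 sphere. -/
theorem borsuk_ulam (k j : ℕ) (F : (Fin k → ℝ) → EuclideanSpace ℝ (Fin j))
    (hc : ContinuousOn F {a | ∑ i, |a i| = 1})
    (hn : ∀ a, ∑ i, |a i| = 1 → ‖F a‖ = 1)
    (ho : ∀ a, ∑ i, |a i| = 1 → F (-a) = - F a) : k ≤ j := by
  by_contra! hjk
  obtain ⟨m, rfl⟩ : ∃ m, k = m + 1 := ⟨k - 1, by omega⟩
  have hcomp : IsCompact {a : Fin (m+1) → ℝ | ∑ i, |a i| = 1} := by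
    apply Metric.isCompact_of_isClosed_isBounded
    · exact isClosed_eq (by fun_prop) continuous_const
    · refine (Metric.isBounded_closedBall (x := 0) (r := 1)).subset ?_
      intro x hx
      rw [mem_closedBall_zero_iff, pi_norm_le_iff_of_nonneg zero_le_one]
      intro i
      rw [← hx]
      exact Finset.single_le_sum (f := fun i => |x i|) (fun i _ => abs_nonneg _) (Finset.mem_univ i)
  have huc := hcomp.uniformContinuousOn_of_continuous hc
  rw [Metric.uniformContinuousOn_iff] at huc
  set ε : ℝ := 1 / (2 * (j + 1)) with hε
  obtain ⟨δ, hδ, hF⟩ := huc ε (by positivity)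
  classical
  let tie : (Fin (m+1) → ℝ) → ZMod 2 := fun x => if 0 < toLex x then 1 else 0
  let F0 : (Fin (m+1) → ℝ) → EuclideanSpace ℝ (Fin j) := fun a => F ((∑ i, |a i|)⁻¹ • a)
  let s : ℕ → (Fin (m+1) → ℝ) → ZMod 2 := fun i x =>
    if h : i < j then (if 0 < F0 x ⟨i, h⟩ then 1 else if F0 x ⟨i, h⟩ < 0 then 0 else tie x) else tie x
  have htie : ∀ x, x ≠ 0 → tie (-x) = tie x + 1 := by
    intro x hx
    have hx' : toLex x ≠ 0 := fun h => hx h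
    simp only [tie]
    rw [show toLex (-x) = - toLex x from rfl, neg_pos]
    rcases lt_or_gt_of_ne hx' with h | h
    · have h' : ¬ 0 < toLex x := h.not_gt
      exact (if_pos h).trans (by rw [show (if 0 < toLex x then (1 : ZMod 2) else 0) = 0 from if_neg h', zero_add])
    · have h' : ¬ toLex x < 0 := h.not_gt
      exact (if_neg h').trans (by rw [show (if 0 < toLex x then (1 : ZMod 2) else 0) = 1 from if_pos h, two_self])
  have hnormpos : ∀ x : Fin (m+1) → ℝ, x ≠ 0 → ∑ i, |x i| ≠ 0 := by
    intro x hx h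
    apply hx
    rw [Finset.sum_eq_zero_iff_of_nonneg (fun i _ => abs_nonneg _)] at h
    funext i
    simpa using h i (Finset.mem_univ i)
  have hF0odd : ∀ x, x ≠ 0 → F0 (-x) = - F0 x := by
    intro x hx
    have h0 := hnormpos x hx
    have hpos : 0 ≤ ∑ i, |x i| := Finset.sum_nonneg (fun i _ => abs_nonneg _)
    simp only [F0, Pi.neg_apply, abs_neg, smul_neg]
    apply ho
    simp only [Pi.smul_apply, smul_eq_mul, abs_mul, abs_inv, abs_of_nonneg hpos]
    rw [← Finset.mul_sum, inv_mul_cancel₀ h0]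
  have hs : ∀ i, ∀ x : Fin (m+1) → ℝ, x ≠ 0 → s i (-x) = s i x + 1 := by
    intro i x hx
    simp only [s]
    by_cases hi : i < j
    · simp only [hi, dif_pos, hF0odd x hx, PiLp.neg_apply, neg_pos, neg_lt_zero]
      rcases lt_trichotomy (F0 x ⟨i, hi⟩) 0 with h | h | h
      · rw [if_pos h, if_neg h.not_gt, if_pos h, zero_add]
      · simp only [h, lt_irrefl, if_false]
        exact htie x hx
      · rw [if_neg h.not_gt, if_pos h, if_pos h, two_self]
    · simp only [hi, dif_neg, not_false_iff]
      exact htie x hx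
  obtain ⟨h, h1, -, h3⟩ := tower (m+1) s hs m le_rfl δ hδ
  have : ∃ l ∈ h, W s l ≠ 0 := by
    by_contra! hcon
    rw [pair_congr (ψ := fun _ => 0) hcon] at h3
    simp [pair] at h3
  obtain ⟨l, hl, hWl⟩ := this
  obtain ⟨a1, a2, a3⟩ := h1 l hl
  have hdiff := W_ne s l hWl
  have hF0 : ∀ x ∈ l, F0 x = F x := by
    intro x hx
    simp only [F0, (a2 x hx).1, inv_one, one_smul]
  obtain ⟨z, hz⟩ : ∃ z, z ∈ l := by
    cases l with
    | nil => simp at a1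
    | cons z l => exact ⟨z, by simp⟩
  have hsmall : ∀ i : Fin j, |F z i| ≤ 2 * ε := by
    intro i
    obtain ⟨x, hx, y, hy, hxy⟩ := hdiff i (by omega)
    have hcl : ∀ u ∈ l, ∀ v ∈ l, |F u i - F v i| ≤ ε := by
      intro u hu v hv
      have := (hF u (a2 u hu).1 v (a2 v hv).1 (a3 u hu v hv)).le
      rw [dist_eq_norm] at this
      exact le_trans (by simpa using PiLp.norm_apply_le (F u - F v) i) this
    simp only [s, i.2, dif_pos, hF0 x hx, hF0 y hy, Fin.eta] at hxy
    have hx1 : |F x i| ≤ ε := by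
      have h := hcl x hx y hy
      rw [abs_le] at h ⊢
      rcases lt_trichotomy (F x i) 0 with h1 | h1 | h1
      · rw [if_neg h1.not_gt, if_pos h1] at hxy
        have : ¬ F y i < 0 := by
          intro h'
          rw [if_neg h'.not_gt, if_pos h'] at hxy
          exact hxy rfl
        constructor <;> linarith
      · rw [h1]
        have : 0 < ε := by positivity
        constructor <;> linarith
      · rw [if_pos h1] at hxy
        have : ¬ 0 < F y i := by
          intro h'
          rw [if_pos h'] at hxy
          exact hxy rfl
        constructor <;> linarith
    have h2 := hcl z hz x hx
    have := abs_sub_abs_le_abs_sub (F z i) (F x i)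
    linarith
  have hzn := hn z (a2 z hz).1
  have hsq : ‖F z‖ ^ 2 = ∑ i, |F z i| ^ 2 := by
    rw [EuclideanSpace.norm_sq_eq]
    simp
  have : ∑ i, |F z i| ^ 2 ≤ ∑ _i : Fin j, (2 * ε) ^ 2 := by
    gcongr with i
    exact hsmall i
  rw [← hsq, hzn] at this
  simp only [Finset.sum_const, Finset.card_univ, Fintype.card_fin, nsmul_eq_mul] at this
  have e2 : 2 * ε = 1 / (j + 1) := by rw [hε]; field_simp
  rw [e2, div_pow, one_pow] at this
  have hj : (0:ℝ) ≤ j := by positivity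
  rw [mul_one_div, le_div_iff₀ (by positivity)] at this
  nlinarith

end BU

section SobolevHelpers

theorem pt2_0 (a b : ℝ) : (pt2 a b) 0 = a := by simp [pt2]
theorem pt2_1 (a b : ℝ) : (pt2 a b) 1 = b := by simp [pt2]

theorem pt2_eta (q : EucN 2) : pt2 (q 0) (q 1) = q := by
  ext i; fin_cases i <;> simp [pt2]

theorem contDiff_pt2 : ContDiff ℝ (⊤ : ℕ∞) (fun z : ℝ × ℝ => pt2 z.1 z.2) := by
  unfold pt2
  apply (EuclideanSpace.equiv (Fin 2) ℝ).symm.contDiff.comp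
  rw [contDiff_pi]
  intro i
  fin_cases i
  · exact contDiff_fst
  · exact contDiff_snd

theorem mp_pt2 : MeasurePreserving (fun z : ℝ × ℝ => pt2 z.1 z.2) volume volume :=
  (PiLp.volume_preserving_toLp (Fin 2)).comp (volume_preserving_finTwoArrow ℝ).symm

theorem me_pt2 : MeasurableEmbedding (fun z : ℝ × ℝ => pt2 z.1 z.2) :=
  (MeasurableEquiv.toLp 2 (Fin 2 → ℝ)).measurableEmbedding.comp
    (MeasurableEquiv.finTwoArrow (α := ℝ)).symm.measurableEmbedding

/-- the point of `EucN 1` with given coordinate -/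
def pt1 (a : ℝ) : EucN 1 := (EuclideanSpace.equiv (Fin 1) ℝ).symm (fun _ => a)

theorem pt1_0 (a : ℝ) : (pt1 a) 0 = a := by simp [pt1]
theorem pt1_eta (q : EucN 1) : pt1 (q 0) = q := by
  ext i; fin_cases i; simp [pt1]

theorem contDiff_pt1 : ContDiff ℝ (⊤ : ℕ∞) pt1 := by
  unfold pt1
  apply (EuclideanSpace.equiv (Fin 1) ℝ).symm.contDiff.comp
  rw [contDiff_pi]
  intro i
  exact contDiff_id

theorem mp_pt1 : MeasurePreserving pt1 volume volume :=
  (PiLp.volume_preserving_toLp (Fin 1)).comp (volume_preserving_funUnique (Fin 1) ℝ).symm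

theorem me_pt1 : MeasurableEmbedding pt1 :=
  (MeasurableEquiv.toLp 2 (Fin 1 → ℝ)).measurableEmbedding.comp
    (MeasurableEquiv.funUnique (Fin 1) ℝ).symm.measurableEmbedding

theorem contDiff_coord {N : ℕ} (i : Fin N) : ContDiff ℝ (⊤ : ℕ∞) (fun q : EucN N => q i) :=
  (EuclideanSpace.proj (𝕜 := ℝ) i).contDiff

theorem isTest_of {N : ℕ} {Ω K : Set (EucN N)} {ψ : EucN N → ℝ} (h : ContDiff ℝ (⊤ : ℕ∞) ψ)
    (hK : IsCompact K) (hKΩ : K ⊆ Ω) (hs : ∀ x, ψ x ≠ 0 → x ∈ K) : IsTestFun Ω ψ := by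
  have : tsupport ψ ⊆ K := closure_minimal hs hK.isClosed
  exact ⟨h, hK.of_isClosed_subset (isClosed_tsupport _) this, this.trans hKΩ⟩

theorem norm_gradient {N : ℕ} (ψ : EucN N → ℝ) (x : EucN N) :
    ‖gradient ψ x‖ = ‖fderiv ℝ ψ x‖ := by
  simp [gradient]

theorem continuous_gradient {N : ℕ} {ψ : EucN N → ℝ} (h : ContDiff ℝ (⊤ : ℕ∞) ψ) :
    Continuous (fun x => gradient ψ x) := by
  unfold gradient
  exact (LinearIsometryEquiv.continuous _).comp (h.continuous_fderiv (by simp))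

theorem gradient_zero_of {N : ℕ} {ψ : EucN N → ℝ} {x : EucN N} (hx : x ∉ tsupport ψ) :
    gradient ψ x = 0 := by
  have : fderiv ℝ ψ x = 0 := by
    by_contra h
    exact hx (support_fderiv_subset ℝ h)
  simp [gradient, this]

theorem hcs_gradient {N : ℕ} {ψ : EucN N → ℝ} (h : HasCompactSupport ψ) :
    HasCompactSupport (fun x => gradient ψ x) := by
  apply HasCompactSupport.of_support_subset_isCompact h
  intro x hx
  by_contra h'
  exact hx (gradient_zero_of h')

/-- integrability of powers of continuous compactly supported functions -/
theorem integrable_rpow {X E : Type*} [TopologicalSpace X] [MeasurableSpace X] [BorelSpace X] [T2Space X]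
    [NormedAddCommGroup E] {μ : Measure X} [IsFiniteMeasureOnCompacts μ] {f : X → E}
    (hf : Continuous f) (hc : HasCompactSupport f) {p : ℝ} (hp : 0 < p) :
    Integrable (fun x => ‖f x‖ ^ p) μ := by
  apply Continuous.integrable_of_hasCompactSupport
  · exact hf.norm.rpow_const (fun _ => Or.inr hp.le)
  · apply HasCompactSupport.of_support_subset_isCompact hc
    intro x hx
    apply subset_tsupport
    intro h
    apply hx
    simp [h, Real.zero_rpow hp.ne']

theorem lp_integral {N : ℕ} {E : Type*} [NormedAddCommGroup E] {p : ℝ} (hp : 1 < p)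
    (f : Lp E (ENNReal.ofReal p) (volume : Measure (EucN N))) :
    ∫ x, ‖f x‖ ^ p = ‖f‖ ^ p := by
  have h0 : ENNReal.ofReal p ≠ 0 := by simp; linarith
  have h1 := (Lp.memLp f).eLpNorm_eq_integral_rpow_norm h0 ENNReal.ofReal_ne_top
  have hp0 : 0 ≤ p := by linarith
  rw [ENNReal.toReal_ofReal hp0] at h1
  have hnn : 0 ≤ ∫ x, ‖f x‖ ^ p := integral_nonneg (fun x => by positivity)
  rw [Lp.norm_def, h1, ENNReal.toReal_ofReal (by positivity), Real.rpow_inv_rpow hnn (by linarith)]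

/-- the pair of a test function -/
theorem exists_pair {N : ℕ} (p : ℝ) {Ω : Set (EucN N)} {ψ : EucN N → ℝ}
    (h : IsTestFun Ω ψ) : ∃ w : SobPair N (ENNReal.ofReal p),
      (⇑w.1 =ᵐ[volume] ψ) ∧ (⇑w.2 =ᵐ[volume] fun x => gradient ψ x) := by
  have m1 : MemLp ψ (ENNReal.ofReal p) (volume : Measure (EucN N)) :=
    h.1.continuous.memLp_of_hasCompactSupport h.2.1
  have m2 : MemLp (fun x => gradient ψ x) (ENNReal.ofReal p) (volume : Measure (EucN N)) :=
    (continuous_gradient h.1).memLp_of_hasCompactSupport (hcs_gradient h.2.1)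
  exact ⟨(m1.toLp, m2.toLp), m1.coeFn_toLp, m2.coeFn_toLp⟩

theorem rep_integral {N : ℕ} {p : ℝ} {w : SobPair N (ENNReal.ofReal p)} {ψ : EucN N → ℝ}
    (h1 : ⇑w.1 =ᵐ[volume] ψ) (h2 : ⇑w.2 =ᵐ[volume] fun x => gradient ψ x) :
    (∫ x, |w.1 x| ^ p) = (∫ x, |ψ x| ^ p) ∧ (∫ x, ‖w.2 x‖ ^ p) = ∫ x, ‖gradient ψ x‖ ^ p := by
  constructor
  · apply integral_congr_ae
    filter_upwards [h1] with x hx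
    rw [hx]
  · apply integral_congr_ae
    filter_upwards [h2] with x hx
    rw [hx]

theorem gradient_const_mul {N : ℕ} {ψ : EucN N → ℝ} (h : ContDiff ℝ (⊤ : ℕ∞) ψ) (c : ℝ)
    (x : EucN N) : gradient (fun x => c * ψ x) x = c • gradient ψ x := by
  unfold gradient
  rw [fderiv_const_mul (h.differentiable (by simp) x)]
  simp

theorem test_const_mul {N : ℕ} {Ω : Set (EucN N)} {ψ : EucN N → ℝ} (h : IsTestFun Ω ψ) (c : ℝ) :
    IsTestFun Ω (fun x => c * ψ x) := by
  apply isTest_of (contDiff_const.mul h.1) h.2.1 h.2.2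
  intro x hx
  exact subset_tsupport _ (right_ne_zero_of_mul hx)

/-- normalisation of a test function -/
theorem test_normalize {N : ℕ} {p : ℝ} (hp : 1 < p) {Ω : Set (EucN N)} {ψ : EucN N → ℝ}
    (h : IsTestFun Ω ψ) (hI : 0 < ∫ x, |ψ x| ^ p) : ∃ ψ', IsTestFun Ω ψ' ∧
      (∫ x, |ψ' x| ^ p) = 1 ∧
      (∫ x, ‖gradient ψ' x‖ ^ p) = (∫ x, ‖gradient ψ x‖ ^ p) / ∫ x, |ψ x| ^ p := by
  set I := ∫ x, |ψ x| ^ p with hIdef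
  set c := (I⁻¹) ^ (p⁻¹) with hc
  have hc0 : 0 ≤ c := by positivity
  have hcp : c ^ p = I⁻¹ := Real.rpow_inv_rpow (by positivity) (by linarith)
  refine ⟨fun x => c * ψ x, test_const_mul h c, ?_, ?_⟩
  · simp only [abs_mul, Real.mul_rpow hc0 (abs_nonneg _), abs_of_nonneg hc0, hcp]
    rw [integral_const_mul, ← hIdef, inv_mul_cancel₀ hI.ne']
  · simp only [gradient_const_mul h.1, norm_smul, Real.mul_rpow hc0 (norm_nonneg _),
      Real.norm_eq_abs, abs_of_nonneg hc0, hcp]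
    rw [integral_const_mul, inv_mul_eq_div]

theorem lambda1p_mul_le {N : ℕ} {p : ℝ} (hp : 1 < p) {Ω : Set (EucN N)} {ψ : EucN N → ℝ}
    (h : IsTestFun Ω ψ) : lambda1p N p hp.le Ω * ENNReal.ofReal (∫ x, |ψ x| ^ p) ≤
      ENNReal.ofReal (∫ x, ‖gradient ψ x‖ ^ p) := by
  rcases (integral_nonneg (fun x => by positivity) : 0 ≤ ∫ x, |ψ x| ^ p).eq_or_lt with h0 | h0
  · rw [← h0]; simp
  · obtain ⟨ψ', t1, t2, t3⟩ := test_normalize hp h h0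
    obtain ⟨w, w1, w2⟩ := exists_pair p t1
    obtain ⟨r1, r2⟩ := rep_integral w1 w2
    have := fact_one_le_ofReal hp.le
    have : lambda1p N p hp.le Ω ≤ ENNReal.ofReal (∫ x, ‖gradient ψ' x‖ ^ p) := by
      apply sInf_le
      refine ⟨w, subset_closure ⟨ψ', t1, w1, w2⟩, r1.trans t2, ?_⟩
      rw [r2]
    refine (mul_le_mul_left this _).trans ?_
    rw [← ENNReal.ofReal_mul (integral_nonneg (fun x => by positivity)), t3,
      div_mul_cancel₀ _ h0.ne']

theorem le_lambda1p {N : ℕ} {p : ℝ} (hp : 1 < p) {Ω : Set (EucN N)} {c : ℝ}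
    (H : ∀ ψ, IsTestFun Ω ψ → c * (∫ x, |ψ x| ^ p) ≤ ∫ x, ‖gradient ψ x‖ ^ p) :
    ENNReal.ofReal c ≤ lambda1p N p hp.le Ω := by
  have := fact_one_le_ofReal hp.le
  apply le_sInf
  rintro t ⟨w, hw, hw1, rfl⟩
  apply ENNReal.ofReal_le_ofReal
  have key : W10 N p hp.le Ω ⊆ {w | c * ‖w.1‖ ^ p ≤ ‖w.2‖ ^ p} := by
    apply closure_minimal
    · rintro w ⟨ψ, t, w1, w2⟩
      obtain ⟨r1, r2⟩ := rep_integral w1 w2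
      have := H ψ t
      rw [← r1, ← r2] at this
      simp only [mem_ofPred_eq]
      rw [← lp_integral hp, ← lp_integral hp]
      exact this
    · apply isClosed_le
      · exact continuous_const.mul (continuous_fst.norm.rpow_const (fun _ => Or.inr (by linarith)))
      · exact (continuous_snd.norm.rpow_const (fun _ => Or.inr (by linarith)))
  have := key hw
  simp only [mem_ofPred_eq] at this
  rw [← lp_integral hp, ← lp_integral hp] at this
  simp only [Real.norm_eq_abs] at this
  rw [hw1, mul_one] at this
  exact this

theorem exists_test_lt {N : ℕ} {p : ℝ} (hp : 1 < p) {Ω : Set (EucN N)} {c : ℝ}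
    (H : lambda1p N p hp.le Ω < ENNReal.ofReal c) : ∃ ψ, IsTestFun Ω ψ ∧
      (∫ x, |ψ x| ^ p) = 1 ∧ (∫ x, ‖gradient ψ x‖ ^ p) < c := by
  by_contra! hcon
  refine absurd (le_lambda1p hp (c := c) ?_) (not_le.2 H)
  intro ψ hψ
  rcases (integral_nonneg (fun x => by positivity) : 0 ≤ ∫ x, |ψ x| ^ p).eq_or_lt with h0 | h0
  · rw [← h0, mul_zero]
    exact integral_nonneg (fun x => by positivity)
  · obtain ⟨ψ', t1, t2, t3⟩ := test_normalize hp hψ h0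
    have := hcon ψ' t1 t2
    rw [t3, le_div_iff₀ h0] at this
    exact this

theorem integral_rpow_pos {X : Type*} [TopologicalSpace X] [MeasurableSpace X] [BorelSpace X] [T2Space X]
    {μ : Measure X} [IsFiniteMeasureOnCompacts μ] [μ.IsOpenPosMeasure] {f : X → ℝ}
    (hf : Continuous f) (hc : HasCompactSupport f) {p : ℝ} (hp : 0 < p) {x : X} (hx : f x ≠ 0) :
    0 < ∫ x, |f x| ^ p ∂μ := by
  apply Continuous.integral_pos_of_hasCompactSupport_nonneg_nonzero (x := x)
  · exact hf.abs.rpow_const (fun _ => Or.inr hp.le)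
  · apply HasCompactSupport.of_support_subset_isCompact hc
    intro x hx
    apply subset_tsupport
    intro h
    apply hx
    simp [h, Real.zero_rpow hp.ne']
  · intro x; positivity
  · have : 0 < |f x| := abs_pos.2 hx
    positivity

theorem lambda1_ne_top {p : ℝ} (hp : 1 < p) :
    lambda1p 1 p hp.le {x : EucN 1 | x 0 ∈ Ioo (-(1/2) : ℝ) (1/2)} ≠ ⊤ := by
  let b : ContDiffBump (0 : EucN 1) := ⟨1/8, 1/4, by norm_num, by norm_num⟩
  have ht : IsTestFun {x : EucN 1 | x 0 ∈ Ioo (-(1/2) : ℝ) (1/2)} b := by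
    apply isTest_of b.contDiff (isCompact_closedBall (0 : EucN 1) (1/4))
    · intro x hx
      rw [mem_closedBall_zero_iff] at hx
      have := (PiLp.norm_apply_le x 0).trans hx
      rw [Real.norm_eq_abs, abs_le] at this
      constructor <;> linarith [this.1, this.2]
    · intro x hx
      have : x ∈ Function.support b := hx
      rw [b.support_eq] at this
      exact ball_subset_closedBall this
  have hpos : 0 < ∫ x, |b x| ^ p :=
    integral_rpow_pos ht.1.continuous ht.2.1 (by linarith) (x := 0)
      (by rw [b.one_of_mem_closedBall (by simp [b])]; norm_num)
  have := lambda1p_mul_le hp ht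
  intro h
  rw [h, ENNReal.top_mul (by simpa using hpos)] at this
  simp at this

end SobolevHelpers

section Inequalities

theorem poincare1 {p : ℝ} (hp : 1 < p) {f : ℝ → ℝ} (hf : ContDiff ℝ (⊤ : ℕ∞) f)
    {K : Set ℝ} (hK : IsCompact K) (hfK : ∀ x, f x ≠ 0 → x ∈ K) {a ℓ : ℝ} (hℓ : 0 < ℓ)
    (hKI : K ⊆ Ioo (a - ℓ/2) (a + ℓ/2)) :
    (lambda1p 1 p hp.le {x : EucN 1 | x 0 ∈ Ioo (-(1/2) : ℝ) (1/2)}).toReal * (∫ x, |f x| ^ p)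
      ≤ ℓ ^ p * ∫ x, |deriv f x| ^ p := by
  set Λ := lambda1p 1 p hp.le {x : EucN 1 | x 0 ∈ Ioo (-(1/2) : ℝ) (1/2)} with hΛ
  set ψ : EucN 1 → ℝ := fun x => f (a + ℓ * x 0) with hψ
  have hcoord : ContDiff ℝ (⊤ : ℕ∞) (fun x : EucN 1 => a + ℓ * x 0) :=
    contDiff_const.add (contDiff_const.mul (contDiff_coord 0))
  have ht : IsTestFun {x : EucN 1 | x 0 ∈ Ioo (-(1/2) : ℝ) (1/2)} ψ := by
    apply isTest_of (hf.comp hcoord)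
      ((hK.image (f := fun y => (y - a) / ℓ) (by fun_prop)).image contDiff_pt1.continuous)
    · rintro _ ⟨_, ⟨y, hy, rfl⟩, rfl⟩
      have := hKI hy
      simp only [mem_ofPred_eq, pt1_0, mem_Ioo] at this ⊢
      rw [lt_div_iff₀ hℓ, div_lt_iff₀ hℓ]
      constructor <;> linarith [this.1, this.2]
    · intro x hx
      refine ⟨x 0, ⟨a + ℓ * x 0, hfK _ hx, ?_⟩, pt1_eta x⟩
      field_simp
      ring
  have hgr : ∀ x, ‖gradient ψ x‖ ≤ ℓ * |deriv f (a + ℓ * x 0)| := by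
    intro x
    rw [norm_gradient]
    have h1 : HasFDerivAt (fun x : EucN 1 => a + ℓ * x 0)
        (ℓ • (EuclideanSpace.proj (𝕜 := ℝ) (0 : Fin 1) : EucN 1 →L[ℝ] ℝ)) x :=
      ((EuclideanSpace.proj (𝕜 := ℝ) (0 : Fin 1) : EucN 1 →L[ℝ] ℝ).hasFDerivAt.const_mul ℓ).const_add a
    have h2 : HasDerivAt f (deriv f (a + ℓ * x 0)) (a + ℓ * x 0) :=
      (hf.differentiable (by simp) _).hasDerivAt
    have h3 := (h2.comp_hasFDerivAt x h1).fderiv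
    have h3' : fderiv ℝ ψ x = deriv f (a + ℓ * x 0) •
      (ℓ • (EuclideanSpace.proj (𝕜 := ℝ) (0 : Fin 1) : EucN 1 →L[ℝ] ℝ)) := h3
    rw [h3']
    refine ContinuousLinearMap.opNorm_le_bound _ (by positivity) (fun v => ?_)
    have hv := PiLp.norm_apply_le v 0
    rw [Real.norm_eq_abs] at hv ⊢
    change |deriv f (a + ℓ * x 0) * (ℓ * v 0)| ≤ _
    rw [abs_mul, abs_mul, abs_of_pos hℓ]
    calc |deriv f (a + ℓ * x 0)| * (ℓ * |v 0|) = ℓ * |deriv f (a + ℓ * x 0)| * |v 0| := by ring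
      _ ≤ _ := by gcongr
  have hmain := lambda1p_mul_le hp ht
  have hΛt : Λ ≠ ⊤ := lambda1_ne_top hp
  rw [← hΛ, ← ENNReal.ofReal_toReal hΛt, ← ENNReal.ofReal_mul ENNReal.toReal_nonneg,
    ENNReal.ofReal_le_ofReal_iff (integral_nonneg (fun x => by positivity))] at hmain
  have e1 : ∫ x, |ψ x| ^ p = ℓ⁻¹ * ∫ x, |f x| ^ p := by
    rw [← mp_pt1.integral_comp me_pt1]
    simp only [hψ, pt1_0]
    rw [Measure.integral_comp_mul_left (fun t => |f (a + t)| ^ p) ℓ,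
      integral_add_left_eq_self (fun t => |f t| ^ p) a, abs_of_pos (by positivity), smul_eq_mul]
  have hdc : HasCompactSupport (deriv f) :=
    (HasCompactSupport.of_support_subset_isCompact hK hfK).deriv
  have hd : Continuous (deriv f) := hf.continuous_deriv (by simp)
  have e2 : ∫ x, ‖gradient ψ x‖ ^ p ≤ ℓ⁻¹ * (ℓ ^ p * ∫ x, |deriv f x| ^ p) := by
    have e3 : ∫ x : EucN 1, (ℓ * |deriv f (a + ℓ * x 0)|) ^ p
        = ℓ⁻¹ * (ℓ ^ p * ∫ x, |deriv f x| ^ p) := by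
      rw [← mp_pt1.integral_comp me_pt1]
      simp only [pt1_0, Real.mul_rpow hℓ.le (abs_nonneg _)]
      rw [integral_const_mul, Measure.integral_comp_mul_left (fun t => |deriv f (a + t)| ^ p) ℓ,
        integral_add_left_eq_self (fun t => |deriv f t| ^ p) a, abs_of_pos (by positivity),
        smul_eq_mul]
      ring
    rw [← e3]
    apply integral_mono_of_nonneg
    · exact ae_of_all _ (fun x => by positivity)
    · rw [← mp_pt1.integrable_comp_emb me_pt1]
      have : ((fun x : EucN 1 => (ℓ * |deriv f (a + ℓ * x 0)|) ^ p) ∘ pt1)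
          = fun t => ℓ ^ p * |deriv f (a + ℓ * t)| ^ p := by
        funext t
        simp only [Function.comp, pt1_0, Real.mul_rpow hℓ.le (abs_nonneg _)]
      rw [this]
      apply Integrable.const_mul
      have hi : Integrable (fun t => |deriv f t| ^ p) :=
        integrable_rpow hd hdc (by linarith)
      exact (hi.comp_add_left a).comp_mul_left' hℓ.ne'
    · exact ae_of_all _ (fun x => by
        exact Real.rpow_le_rpow (norm_nonneg _) (hgr x) (by linarith))
  rw [e1] at hmain
  have := hmain.trans e2
  have h' : ℓ⁻¹ * (Λ.toReal * ∫ x, |f x| ^ p) ≤ ℓ⁻¹ * (ℓ ^ p * ∫ x, |deriv f x| ^ p) := by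
    linarith
  exact le_of_mul_le_mul_left h' (by positivity)

theorem lower_bound {p : ℝ} (hp : 1 < p) {A : Set (EucN 2)} {ℓ : ℝ} (hℓ : 0 < ℓ)
    (hA : ∀ x, ∃ a, ∀ y, pt2 x y ∈ A → y ∈ Ioo (a - ℓ/2) (a + ℓ/2)) :
    ENNReal.ofReal ((lambda1p 1 p hp.le
      {x : EucN 1 | x 0 ∈ Ioo (-(1/2) : ℝ) (1/2)}).toReal / ℓ ^ p) ≤ lambda1p 2 p hp.le A := by
  set Λ := (lambda1p 1 p hp.le {x : EucN 1 | x 0 ∈ Ioo (-(1/2) : ℝ) (1/2)}).toReal with hΛ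
  apply le_lambda1p hp
  intro ψ ht
  have hp0 : 0 < p := by linarith
  have i1 : Integrable (fun q => |ψ q| ^ p) := integrable_rpow ht.1.continuous ht.2.1 hp0
  have i2 : Integrable (fun q => ‖gradient ψ q‖ ^ p) :=
    integrable_rpow (continuous_gradient ht.1) (hcs_gradient ht.2.1) hp0
  rw [← mp_pt2.integrable_comp_emb me_pt2] at i1 i2
  replace i1 : Integrable (fun z : ℝ × ℝ => |ψ (pt2 z.1 z.2)| ^ p) (volume.prod volume) := i1
  replace i2 : Integrable (fun z : ℝ × ℝ => ‖gradient ψ (pt2 z.1 z.2)‖ ^ p)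
    (volume.prod volume) := i2
  rw [← mp_pt2.integral_comp me_pt2 (fun q => |ψ q| ^ p),
    ← mp_pt2.integral_comp me_pt2 (fun q => ‖gradient ψ q‖ ^ p)]
  rw [Measure.volume_eq_prod]
  rw [integral_prod _ i1, integral_prod _ i2, ← integral_const_mul]
  apply integral_mono (i1.integral_prod_left.const_mul _) i2.integral_prod_left
  intro x
  simp only
  obtain ⟨a, ha⟩ := hA x
  set K := {y | pt2 x y ∈ tsupport ψ} with hKdef
  have hline : ContDiff ℝ (⊤ : ℕ∞) (fun y : ℝ => pt2 x y) :=
    contDiff_pt2.comp (contDiff_const.prodMk contDiff_id)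
  have hK : IsCompact K := by
    apply (ht.2.1.image (f := fun q : EucN 2 => q 1) (contDiff_coord 1).continuous).of_isClosed_subset
    · exact (isClosed_tsupport ψ).preimage hline.continuous
    · intro y hy
      exact ⟨pt2 x y, hy, pt2_1 x y⟩
  have hfK : ∀ y, ψ (pt2 x y) ≠ 0 → y ∈ K := fun y hy => subset_tsupport _ hy
  have hfc : ContDiff ℝ (⊤ : ℕ∞) (fun y => ψ (pt2 x y)) := ht.1.comp hline
  have h1 := poincare1 hp hfc hK hfK hℓ (fun y hy => ha y (ht.2.2 hy))
  have hder : ∀ y, |deriv (fun y => ψ (pt2 x y)) y| ≤ ‖gradient ψ (pt2 x y)‖ := by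
    intro y
    have d1 : HasDerivAt (fun y : ℝ => pt2 x y) (pt2 0 1) y := by
      have : (fun y : ℝ => pt2 x y) = fun y => pt2 x 0 + y • pt2 0 1 := by
        funext y
        ext i; fin_cases i <;> simp [pt2]
      rw [this]
      simpa using ((hasDerivAt_id y).smul_const (pt2 0 1)).const_add (pt2 x 0)
    have d2 := ((ht.1.differentiable (by simp) (pt2 x y)).hasFDerivAt.comp_hasDerivAt y d1).deriv
    have d2' : deriv (fun y => ψ (pt2 x y)) y = fderiv ℝ ψ (pt2 x y) (pt2 0 1) := d2
    rw [d2', norm_gradient]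
    have n1 : ‖pt2 0 1‖ = 1 := by
      rw [EuclideanSpace.norm_eq]; simp [pt2]
    have := (fderiv ℝ ψ (pt2 x y)).le_opNorm (pt2 0 1)
    rwa [n1, mul_one, Real.norm_eq_abs] at this
  have hgc : HasCompactSupport (fun y => gradient ψ (pt2 x y)) := by
    apply HasCompactSupport.of_support_subset_isCompact hK
    intro y hy
    by_contra h
    exact hy (gradient_zero_of h)
  have h2 : ∫ y, |deriv (fun y => ψ (pt2 x y)) y| ^ p ≤ ∫ y, ‖gradient ψ (pt2 x y)‖ ^ p := by
    apply integral_mono_of_nonneg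
    · exact ae_of_all _ (fun x => by positivity)
    · exact integrable_rpow ((continuous_gradient ht.1).comp hline.continuous) hgc hp0
    · exact ae_of_all _ (fun y => by
        exact Real.rpow_le_rpow (abs_nonneg _) (hder y) hp0.le)
  have hℓp : 0 < ℓ ^ p := by positivity
  rw [div_mul_eq_mul_div, div_le_iff₀ hℓp]
  refine h1.trans ?_
  rw [mul_comm]
  gcongr

theorem add_rpow_le_split {p : ℝ} (hp : 1 < p) {t : ℝ} (ht : 0 < t) (ht1 : t < 1) {a b : ℝ}
    (ha : 0 ≤ a) (hb : 0 ≤ b) :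
    (a + b) ^ p ≤ t ^ (1 - p) * a ^ p + (1 - t) ^ (1 - p) * b ^ p := by
  have h := (convexOn_rpow hp.le).2 (x := a / t) (y := b / (1 - t))
    (by simp only [mem_Ici]; positivity) (by simp only [mem_Ici]; exact div_nonneg hb (by linarith)) ht.le
    (by linarith : 0 ≤ 1 - t) (by ring)
  have h1 : 0 < 1 - t := by linarith
  simp only [smul_eq_mul] at h
  rw [mul_div_cancel₀ _ ht.ne', mul_div_cancel₀ _ h1.ne', Real.div_rpow ha ht.le,
    Real.div_rpow hb h1.le] at h
  rw [Real.rpow_sub ht, Real.rpow_sub h1, Real.rpow_one, Real.rpow_one]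
  calc _ ≤ _ := h
    _ = _ := by ring

theorem upper_bound {p : ℝ} (hp : 1 < p) {A : Set (EucN 2)} {M₀ : ℝ}
    (hA : ∀ q : EucN 2, q 0 ≤ -M₀ → q 1 ∈ Ioo (-(1/2) : ℝ) (1/2) → q ∈ A) :
    lambda1p 2 p hp.le A ≤ lambda1p 1 p hp.le {x : EucN 1 | x 0 ∈ Ioo (-(1/2) : ℝ) (1/2)} := by
  have hp0 : 0 < p := by linarith
  apply le_of_forall_gt_imp_ge_of_dense
  intro c hc
  by_cases hct : c = ⊤
  · rw [hct]; exact le_top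
  rw [← ENNReal.ofReal_toReal hct] at hc ⊢
  obtain ⟨ψ, ht, hψ1, hψ2⟩ := exists_test_lt hp hc
  set f : ℝ → ℝ := fun y => ψ (pt1 y) with hfdef
  have hf : ContDiff ℝ (⊤ : ℕ∞) f := ht.1.comp contDiff_pt1
  set Kf : Set ℝ := (fun q : EucN 1 => q 0) '' tsupport ψ with hKf
  have hKfc : IsCompact Kf := ht.2.1.image (contDiff_coord 0).continuous
  have hfK : ∀ y, f y ≠ 0 → y ∈ Kf := fun y hy => ⟨pt1 y, subset_tsupport _ hy, pt1_0 y⟩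
  have hKfI : Kf ⊆ Ioo (-(1/2) : ℝ) (1/2) := by
    rintro _ ⟨q, hq, rfl⟩
    exact ht.2.2 hq
  have hfcs : HasCompactSupport f := HasCompactSupport.of_support_subset_isCompact hKfc hfK
  have hIf : ∫ y, |f y| ^ p = 1 := by
    rw [← hψ1, ← mp_pt1.integral_comp me_pt1]
  have hfder : ∀ y, |deriv f y| ≤ ‖gradient ψ (pt1 y)‖ := by
    intro y
    have d1 : HasDerivAt pt1 (pt1 1) y := by
      have : pt1 = fun y => y • pt1 1 := by
        funext y
        ext i; fin_cases i; simp [pt1]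
      rw [this]
      simpa using ((hasDerivAt_id y).smul_const (pt1 1))
    have d2 := ((ht.1.differentiable (by simp) (pt1 y)).hasFDerivAt.comp_hasDerivAt y d1).deriv
    have d2' : deriv f y = fderiv ℝ ψ (pt1 y) (pt1 1) := d2
    rw [d2', norm_gradient]
    have n1 : ‖pt1 1‖ = 1 := by
      rw [EuclideanSpace.norm_eq]; simp [pt1]
    have := (fderiv ℝ ψ (pt1 y)).le_opNorm (pt1 1)
    rwa [n1, mul_one, Real.norm_eq_abs] at this
  set Jf := ∫ y, |deriv f y| ^ p with hJf
  have hJfc : Jf < c.toReal := by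
    refine lt_of_le_of_lt ?_ hψ2
    rw [← mp_pt1.integral_comp me_pt1]
    apply integral_mono_of_nonneg
    · exact ae_of_all _ (fun x => by positivity)
    · have := integrable_rpow (μ := volume) (continuous_gradient ht.1) (hcs_gradient ht.2.1) hp0
      rw [← mp_pt1.integrable_comp_emb me_pt1] at this
      exact this
    · exact ae_of_all _ (fun y => by
        exact Real.rpow_le_rpow (abs_nonneg _) (hfder y) hp0.le)
  have hJf0 : 0 ≤ Jf := integral_nonneg (fun x => by positivity)
  -- cutoff
  let η : ContDiffBump (-2 : ℝ) := ⟨1/2, 1, by norm_num, by norm_num⟩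
  have hηc : ContDiff ℝ (⊤ : ℕ∞) η := η.contDiff
  have hηs : ∀ x, η x ≠ 0 → x ∈ Icc (-3 : ℝ) (-1) := by
    intro x hx
    have : x ∈ Function.support η := hx
    rw [η.support_eq, mem_ball, Real.dist_eq, abs_lt] at this
    simp only [η] at this
    constructor <;> linarith [this.1, this.2]
  have hηcs : HasCompactSupport η := η.hasCompactSupport
  set Iη := ∫ x, |η x| ^ p with hIη
  set Jη := ∫ x, |deriv η x| ^ p with hJη
  have hIηpos : 0 < Iη := integral_rpow_pos hηc.continuous hηcs hp0 (x := -2)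
      (by rw [η.one_of_mem_closedBall (by simp [η])]; norm_num)
  set lam := lambda1p 2 p hp.le A with hlam
  have key : ∀ M : ℝ, 0 < M → M₀ ≤ M → ∀ t : ℝ, 0 < t → t < 1 →
      lam ≤ ENNReal.ofReal (t ^ (1 - p) * Jf + (1 - t) ^ (1 - p) * (M ^ (-p) * (Jη / Iη))) := by
    intro M hM hMM t ht0 ht1
    set g : ℝ → ℝ := fun x => η (M⁻¹ * x) with hg
    have hgc : ContDiff ℝ (⊤ : ℕ∞) g := hηc.comp (contDiff_const.mul contDiff_id)
    have hgs : ∀ x, g x ≠ 0 → x ∈ Icc (-3 * M) (-M) := by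
      intro x hx
      have := hηs _ hx
      rw [mem_Icc, inv_mul_eq_div, le_div_iff₀ hM, div_le_iff₀ hM] at this
      exact ⟨this.1, by linarith [this.2]⟩
    have hgcs : HasCompactSupport g := HasCompactSupport.of_support_subset_isCompact isCompact_Icc hgs
    have hgd : ∀ x, deriv g x = M⁻¹ * deriv η (M⁻¹ * x) := by
      intro x
      have := (hηc.differentiable (by simp) (M⁻¹ * x)).hasDerivAt.comp x
        ((hasDerivAt_id x).const_mul M⁻¹)
      have h2 := this.deriv
      have h3 : deriv g x = deriv η (M⁻¹ * x) * (M⁻¹ * 1) := h2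
      rw [h3]; ring
    have eI : ∫ x, |g x| ^ p = M * Iη := by
      simp only [hg]
      rw [Measure.integral_comp_mul_left (fun t => |η t| ^ p) M⁻¹, inv_inv, abs_of_pos hM,
        smul_eq_mul]
    have eJ : ∫ x, |deriv g x| ^ p = M * (M ^ (-p) * Jη) := by
      simp only [hgd, abs_mul, abs_of_pos (inv_pos.2 hM),
        Real.mul_rpow (inv_pos.2 hM).le (abs_nonneg _)]
      rw [integral_const_mul, Measure.integral_comp_mul_left (fun t => |deriv η t| ^ p) M⁻¹, inv_inv,
        abs_of_pos hM, smul_eq_mul, Real.inv_rpow hM.le, Real.rpow_neg hM.le]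
      ring
    set Ψ : EucN 2 → ℝ := fun q => g (q 0) * f (q 1) with hΨ
    have hΨt : IsTestFun A Ψ := by
      apply isTest_of ((hgc.comp (contDiff_coord 0)).mul (hf.comp (contDiff_coord 1)))
        (((isCompact_Icc (a := -3 * M) (b := -M)).prod hKfc).image contDiff_pt2.continuous)
      · rintro _ ⟨⟨x, y⟩, ⟨hx, hy⟩, rfl⟩
        apply hA
        · rw [pt2_0]; exact hx.2.trans (by linarith)
        · rw [pt2_1]; exact hKfI hy
      · intro q hq
        exact ⟨(q 0, q 1), ⟨hgs _ (left_ne_zero_of_mul hq), hfK _ (right_ne_zero_of_mul hq)⟩,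
          pt2_eta q⟩
    have hΨg : ∀ q, ‖gradient Ψ q‖ ≤ |deriv f (q 1)| * |g (q 0)| + |f (q 1)| * |deriv g (q 0)| := by
      intro q
      rw [norm_gradient]
      have h0 := (hgc.differentiable (by simp) (q 0)).hasDerivAt.comp_hasFDerivAt q
        (EuclideanSpace.proj (𝕜 := ℝ) (0 : Fin 2) : EucN 2 →L[ℝ] ℝ).hasFDerivAt
      have h1 := (hf.differentiable (by simp) (q 1)).hasDerivAt.comp_hasFDerivAt q
        (EuclideanSpace.proj (𝕜 := ℝ) (1 : Fin 2) : EucN 2 →L[ℝ] ℝ).hasFDerivAt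
      have h2 := (h0.mul h1).fderiv
      have h3 : fderiv ℝ Ψ q = g (q 0) • (deriv f (q 1) • (EuclideanSpace.proj (𝕜 := ℝ) (1 : Fin 2) : EucN 2 →L[ℝ] ℝ))
        + f (q 1) • (deriv g (q 0) • (EuclideanSpace.proj (𝕜 := ℝ) (0 : Fin 2) : EucN 2 →L[ℝ] ℝ)) := h2
      rw [h3]
      refine ContinuousLinearMap.opNorm_le_bound _ (by positivity) (fun v => ?_)
      have hv0 := PiLp.norm_apply_le v 0
      have hv1 := PiLp.norm_apply_le v 1
      rw [Real.norm_eq_abs] at hv0 hv1 ⊢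
      change |g (q 0) * (deriv f (q 1) * v 1) + f (q 1) * (deriv g (q 0) * v 0)| ≤ _
      calc |g (q 0) * (deriv f (q 1) * v 1) + f (q 1) * (deriv g (q 0) * v 0)|
          ≤ |g (q 0) * (deriv f (q 1) * v 1)| + |f (q 1) * (deriv g (q 0) * v 0)| := abs_add_le _ _
        _ = |deriv f (q 1)| * |g (q 0)| * |v 1| + |f (q 1)| * |deriv g (q 0)| * |v 0| := by
            simp only [abs_mul]; ring
        _ ≤ |deriv f (q 1)| * |g (q 0)| * ‖v‖ + |f (q 1)| * |deriv g (q 0)| * ‖v‖ := by gcongr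
        _ = _ := by ring
    have hm := lambda1p_mul_le hp hΨt
    have e1 : ∫ q, |Ψ q| ^ p = M * Iη := by
      rw [← mp_pt2.integral_comp me_pt2]
      simp only [hΨ, pt2_0, pt2_1, abs_mul, Real.mul_rpow (abs_nonneg _) (abs_nonneg _)]
      rw [Measure.volume_eq_prod, integral_prod_mul (fun x => |g x| ^ p) (fun y => |f y| ^ p), eI, hIf,
        mul_one]
    have ig : Integrable (fun x => |g x| ^ p) := integrable_rpow hgc.continuous hgcs hp0
    have igd : Integrable (fun x => |deriv g x| ^ p) :=
      integrable_rpow (hgc.continuous_deriv (by simp)) hgcs.deriv hp0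
    have if1 : Integrable (fun x => |f x| ^ p) := integrable_rpow hf.continuous hfcs hp0
    have ifd : Integrable (fun x => |deriv f x| ^ p) :=
      integrable_rpow (hf.continuous_deriv (by simp)) hfcs.deriv hp0
    have P1 := (ig.mul_prod ifd).const_mul (t ^ (1 - p))
    have P2 := (igd.mul_prod if1).const_mul ((1 - t) ^ (1 - p))
    have e2 : ∫ q, ‖gradient Ψ q‖ ^ p ≤ t ^ (1 - p) * (M * Iη * Jf)
        + (1 - t) ^ (1 - p) * (M * (M ^ (-p) * Jη)) := by
      rw [← mp_pt2.integral_comp me_pt2, Measure.volume_eq_prod]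
      have : t ^ (1 - p) * (M * Iη * Jf) + (1 - t) ^ (1 - p) * (M * (M ^ (-p) * Jη))
          = ∫ z : ℝ × ℝ, (t ^ (1 - p) * (|g z.1| ^ p * |deriv f z.2| ^ p)
            + (1 - t) ^ (1 - p) * (|deriv g z.1| ^ p * |f z.2| ^ p)) ∂(volume.prod volume) := by
        rw [integral_add P1 P2, integral_const_mul, integral_const_mul,
          integral_prod_mul (fun x => |g x| ^ p) (fun y => |deriv f y| ^ p),
          integral_prod_mul (fun x => |deriv g x| ^ p) (fun y => |f y| ^ p), eI, eJ, hIf, mul_one]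
      rw [this]
      apply integral_mono_of_nonneg
      · exact ae_of_all _ (fun x => by positivity)
      · exact P1.add P2
      · refine ae_of_all _ (fun z => ?_)
        have h1 := hΨg (pt2 z.1 z.2)
        rw [pt2_0, pt2_1] at h1
        have h2 := add_rpow_le_split hp ht0 ht1 (a := |deriv f z.2| * |g z.1|)
          (b := |f z.2| * |deriv g z.1|) (by positivity) (by positivity)
        simp only
        calc ‖gradient Ψ (pt2 z.1 z.2)‖ ^ p ≤ (|deriv f z.2| * |g z.1| + |f z.2| * |deriv g z.1|) ^ p := by
              gcongr
          _ ≤ _ := h2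
          _ = _ := by
            rw [Real.mul_rpow (abs_nonneg _) (abs_nonneg _), Real.mul_rpow (abs_nonneg _) (abs_nonneg _)]
            ring
    rw [e1] at hm
    have hpos : 0 < M * Iη := by positivity
    have h3 : lam ≤ ENNReal.ofReal (∫ q, ‖gradient Ψ q‖ ^ p) / ENNReal.ofReal (M * Iη) := by
      rw [ENNReal.le_div_iff_mul_le (Or.inl (by simpa using hpos)) (Or.inl ENNReal.ofReal_ne_top)]
      exact hm
    rw [← ENNReal.ofReal_div_of_pos hpos] at h3
    refine h3.trans (ENNReal.ofReal_le_ofReal ?_)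
    rw [div_le_iff₀ hpos]
    refine e2.trans (le_of_eq ?_)
    field_simp
  have key2 : ∀ t : ℝ, 0 < t → t < 1 → lam ≤ ENNReal.ofReal (t ^ (1 - p) * Jf) := by
    intro t ht0 ht1
    have lim : Tendsto (fun M : ℝ => ENNReal.ofReal (t ^ (1 - p) * Jf
        + (1 - t) ^ (1 - p) * (M ^ (-p) * (Jη / Iη)))) atTop
        (𝓝 (ENNReal.ofReal (t ^ (1 - p) * Jf + (1 - t) ^ (1 - p) * (0 * (Jη / Iη))))) := by
      apply ENNReal.tendsto_ofReal
      exact tendsto_const_nhds.add (((tendsto_rpow_neg_atTop hp0).mul_const _).const_mul _)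
    rw [zero_mul, mul_zero, add_zero] at lim
    apply ge_of_tendsto lim
    filter_upwards [eventually_gt_atTop 0, eventually_ge_atTop M₀] with M h1 h2
    exact key M h1 h2 t ht0 ht1
  have key3 : lam ≤ ENNReal.ofReal Jf := by
    have lim : Tendsto (fun t : ℝ => ENNReal.ofReal (t ^ (1 - p) * Jf)) (𝓝[<] 1)
        (𝓝 (ENNReal.ofReal ((1:ℝ) ^ (1 - p) * Jf))) := by
      apply ENNReal.tendsto_ofReal
      apply Filter.Tendsto.mul_const
      apply Tendsto.mono_left _ nhdsWithin_le_nhds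
      exact (Real.continuousAt_rpow_const 1 (1 - p) (Or.inl one_ne_zero)).tendsto
    rw [Real.one_rpow, one_mul] at lim
    apply ge_of_tendsto lim
    filter_upwards [Ioo_mem_nhdsLT (zero_lt_one (α := ℝ))] with t ht
    exact key2 t ht.1 ht.2
  exact key3.trans (ENNReal.ofReal_le_ofReal hJfc.le)

end Inequalities

section Geometry

theorem whip_0 (n : ℕ) (t : ℝ) : whipCurve n t 0 = t := by
  unfold whipCurve; split_ifs <;> simp [pt2_0]

theorem whip_clamp (n : ℕ) (t : ℝ) :
    whipCurve n t 1 = (1 + Real.cos (max (-Real.pi) (min t Real.pi))) / (n + 1) := by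
  have hpi := Real.pi_pos
  unfold whipCurve
  split_ifs with h
  · rw [pt2_1]
    rw [abs_lt] at h
    rw [min_eq_left h.2.le, max_eq_right h.1.le]
  · rw [pt2_1]
    rw [not_lt, le_abs] at h
    rcases h with h | h
    · rw [min_eq_right h, max_eq_right (by linarith), Real.cos_pi]; simp
    · rw [min_eq_left (by linarith), max_eq_left (by linarith), Real.cos_neg, Real.cos_pi]; simp

theorem whip_zero (n : ℕ) {t : ℝ} (ht : Real.pi ≤ |t|) : whipCurve n t 1 = 0 := by
  unfold whipCurve
  rw [if_neg (not_lt.2 ht), pt2_1]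

theorem whip_nonneg (n : ℕ) (t : ℝ) : 0 ≤ whipCurve n t 1 := by
  rw [whip_clamp]
  have := Real.neg_one_le_cos (max (-Real.pi) (min t Real.pi))
  apply div_nonneg <;> [linarith; positivity]

theorem whip_le (n : ℕ) (t : ℝ) : whipCurve n t 1 ≤ 2 := by
  rw [whip_clamp]
  have := Real.cos_le_one (max (-Real.pi) (min t Real.pi))
  rw [div_le_iff₀ (by positivity)]
  have : (0 : ℝ) ≤ n := by positivity
  nlinarith

theorem cos_lip (x y : ℝ) : |Real.cos x - Real.cos y| ≤ |x - y| := by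
  have h := Convex.norm_image_sub_le_of_norm_deriv_le (f := Real.cos) (C := 1) (s := Set.univ)
    (x := y) (y := x) (fun _ _ => Real.differentiableAt_cos)
    (fun z _ => by simp [Real.abs_sin_le_one]) convex_univ (mem_univ _) (mem_univ _)
  simpa using h

theorem whip_lip (n : ℕ) (x y : ℝ) :
    |whipCurve n x 1 - whipCurve n y 1| ≤ |x - y| / (n + 1) := by
  rw [whip_clamp, whip_clamp, ← sub_div, abs_div, abs_of_pos (by positivity : (0 : ℝ) < n + 1)]
  apply div_le_div_of_nonneg_right _ (by positivity)
  rw [add_sub_add_left_eq_sub]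
  refine (cos_lip _ _).trans ?_
  refine (abs_max_sub_max_le_max _ _ _ _).trans ?_
  simp only [sub_self, abs_zero]
  refine max_le (abs_nonneg _) ?_
  refine (abs_min_sub_min_le_max _ _ _ _).trans ?_
  simp

theorem tube_bound {n : ℕ} {q v : EucN 2} {t t0 : ℝ} (ht : t ∈ Ioo (-(1/2) : ℝ) (1/2))
    (hv : ‖v‖ = 1) (hq : q = whipCurve n t0 + t • v) :
    |q 1 - whipCurve n (q 0) 1| < (1 + 1 / ((n : ℝ) + 1)) / 2 := by
  have hv0 := PiLp.norm_apply_le v 0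
  have hv1 := PiLp.norm_apply_le v 1
  rw [hv, Real.norm_eq_abs] at hv0 hv1
  have q0 : q 0 = t0 + t * v 0 := by rw [hq]; simp [whip_0]
  have q1 : q 1 = whipCurve n t0 1 + t * v 1 := by rw [hq]; simp
  have hl := whip_lip n t0 (q 0)
  have hd : |t0 - q 0| ≤ |t| := by
    rw [q0, show t0 - (t0 + t * v 0) = -(t * v 0) by ring, abs_neg, abs_mul]
    exact mul_le_of_le_one_right (abs_nonneg _) hv0
  have ht' : |t| < 1/2 := abs_lt.2 ht
  have h1 : |q 1 - whipCurve n t0 1| ≤ |t| := by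
    rw [q1, add_sub_cancel_left, abs_mul]
    exact mul_le_of_le_one_right (abs_nonneg _) hv1
  have hn : (0 : ℝ) < n + 1 := by positivity
  calc |q 1 - whipCurve n (q 0) 1|
      ≤ |q 1 - whipCurve n t0 1| + |whipCurve n t0 1 - whipCurve n (q 0) 1| := abs_sub_le _ _ _
    _ ≤ |t| + |t| / (n + 1) := by
        refine add_le_add h1 (hl.trans ?_)
        gcongr
    _ = |t| * (1 + 1 / (n + 1)) := by ring
    _ < (1/2) * (1 + 1 / (n + 1)) := by gcongr
    _ = _ := by ring

theorem norm_pt2_le (x y : ℝ) : ‖pt2 x y‖ ≤ |x| + |y| := by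
  have : pt2 x y = x • pt2 1 0 + y • pt2 0 1 := by
    ext i; fin_cases i <;> simp [pt2]
  rw [this]
  refine (norm_add_le _ _).trans ?_
  have n1 : ‖pt2 0 1‖ = 1 := by
    rw [EuclideanSpace.norm_eq]; simp [pt2]
  have n2 : ‖pt2 1 0‖ = 1 := by
    rw [EuclideanSpace.norm_eq]; simp [pt2]
  rw [norm_smul, norm_smul, n1, n2]
  simp

/-- The chain of blocks. -/
def chainSet (B : ℕ → Set (EucN 2)) (L : ℕ → ℝ) : Set (EucN 2) :=
  {q : EucN 2 | q 0 < 0 ∧ q 1 ∈ Ioo (-(1/2) : ℝ) (1/2)} ∪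
    ⋃ n : ℕ, (fun q => q + (2 * (∑ i ∈ Finset.range n, L i) + L n) • pt2 1 0) ''
      (B n ∩ {q : EucN 2 | q 0 ∈ Icc (-(L n)) (L n)})

/-- Left end of the n-th block. -/
def leftEnd (L : ℕ → ℝ) (n : ℕ) : ℝ := 2 * ∑ i ∈ Finset.range n, L i

theorem leftEnd_succ (L : ℕ → ℝ) (n : ℕ) : leftEnd L (n + 1) = leftEnd L n + 2 * L n := by
  unfold leftEnd; rw [Finset.sum_range_succ]; ring

theorem leftEnd_mono {L : ℕ → ℝ} (hL : ∀ n, Real.pi < L n) : Monotone (leftEnd L) := by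
  apply monotone_nat_of_le_succ
  intro n
  rw [leftEnd_succ]
  linarith [hL n, Real.pi_pos]

theorem leftEnd_nonneg {L : ℕ → ℝ} (hL : ∀ n, Real.pi < L n) (n : ℕ) : 0 ≤ leftEnd L n := by
  have := leftEnd_mono hL (Nat.zero_le n)
  simpa [leftEnd] using this

theorem mem_chain {B : ℕ → Set (EucN 2)} {L : ℕ → ℝ}
    (hB : ∀ n, ∀ q ∈ B n, |q 1 - whipCurve n (q 0) 1| < (1 + 1 / ((n : ℝ) + 1)) / 2)
    {q : EucN 2} (hq : q ∈ chainSet B L) : (q 0 < 0 ∧ q 1 ∈ Ioo (-(1/2) : ℝ) (1/2)) ∨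
      ∃ n, leftEnd L n ≤ q 0 ∧ q 0 ≤ leftEnd L (n + 1) ∧
        |q 1 - whipCurve n (q 0 - (leftEnd L n + L n)) 1| < (1 + 1 / ((n : ℝ) + 1)) / 2 := by
  rcases hq with h | h
  · exact Or.inl h
  · right
    obtain ⟨n, q', ⟨hq', hq0⟩, rfl⟩ := mem_iUnion.1 h
    refine ⟨n, ?_⟩
    have e0 : (q' + (2 * (∑ i ∈ Finset.range n, L i) + L n) • pt2 1 0) 0
        = q' 0 + (leftEnd L n + L n) := by
      simp [pt2_0, leftEnd]
    have e1 : (q' + (2 * (∑ i ∈ Finset.range n, L i) + L n) • pt2 1 0) 1 = q' 1 := by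
      simp [pt2_1]
    simp only [e0, e1, leftEnd_succ, add_sub_cancel_right]
    have h0 : q' 0 ∈ Icc (-(L n)) (L n) := hq0
    exact ⟨by linarith [h0.1], by linarith [h0.2], hB n q' hq'⟩

theorem part1 {p : ℝ} (hp : 1 < p) {B : ℕ → Set (EucN 2)} {L : ℕ → ℝ}
    (hL : ∀ n, Real.pi < L n)
    (hB : ∀ n, ∀ q ∈ B n, |q 1 - whipCurve n (q 0) 1| < (1 + 1 / ((n : ℝ) + 1)) / 2) :
    Einfty 2 p hp.le (chainSet B L)
      = lambda1p 1 p hp.le {x : EucN 1 | x 0 ∈ Ioo (-(1/2) : ℝ) (1/2)} := by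
  have hpi := Real.pi_pos
  set Λ := lambda1p 1 p hp.le {x : EucN 1 | x 0 ∈ Ioo (-(1/2) : ℝ) (1/2)} with hΛ
  have hΛt : Λ ≠ ⊤ := lambda1_ne_top hp
  apply le_antisymm
  · apply iSup₂_le
    intro R hR
    have hR : 0 < R := hR
    apply upper_bound hp (M₀ := R + 1)
    intro q h0 h1
    refine ⟨Or.inl ⟨by linarith, h1⟩, fun hc => ?_⟩
    have h2 : q ∈ closedBall (0 : EucN 2) R := closure_ball_subset_closedBall hc
    rw [mem_closedBall_zero_iff] at h2
    have h3 := PiLp.norm_apply_le q 0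
    rw [Real.norm_eq_abs] at h3
    have := neg_le_abs (q 0)
    linarith
  · have key : ∀ m : ℕ, ENNReal.ofReal (Λ.toReal / (1 + 1 / ((m : ℝ) + 1)) ^ p)
        ≤ Einfty 2 p hp.le (chainSet B L) := by
      intro m
      have hS := leftEnd_nonneg hL m
      have hR : 0 < leftEnd L m + 3 := by linarith
      refine le_trans ?_ (le_iSup₂ (f := fun (R : ℝ) (_ : R ∈ Ioi (0 : ℝ)) =>
        lambda1p 2 p hp.le (chainSet B L \ closure (ball (0 : EucN 2) R))) (leftEnd L m + 3) hR)
      apply lower_bound hp (by positivity)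
      have hmem : ∀ x y, pt2 x y ∈ chainSet B L \ closure (ball (0 : EucN 2) (leftEnd L m + 3)) →
          (x < 0 ∧ y ∈ Ioo (-(1/2) : ℝ) (1/2)) ∨
          ∃ n, leftEnd L n ≤ x ∧ x ≤ leftEnd L (n + 1) ∧
            |y - whipCurve n (x - (leftEnd L n + L n)) 1| < (1 + 1 / ((m : ℝ) + 1)) / 2 := by
        rintro x y ⟨hA, hout⟩
        rcases mem_chain hB hA with h | ⟨n, h1, h2, h3⟩
        · left; simpa only [pt2_0, pt2_1] using h
        · right
          simp only [pt2_0, pt2_1] at h1 h2 h3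
          refine ⟨n, h1, h2, h3.trans_le ?_⟩
          have hmn : m ≤ n := by
            by_contra hlt
            push Not at hlt
            apply hout
            rw [closure_ball _ hR.ne', mem_closedBall_zero_iff]
            refine (norm_pt2_le x y).trans ?_
            have hx0 : 0 ≤ x := (leftEnd_nonneg hL n).trans h1
            have hx1 : x ≤ leftEnd L m := h2.trans (leftEnd_mono hL hlt)
            rw [abs_of_nonneg hx0]
            have w0 := whip_nonneg n (x - (leftEnd L n + L n))
            have w1 := whip_le n (x - (leftEnd L n + L n))
            have hn1 : 1 / ((n : ℝ) + 1) ≤ 1 := by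
              rw [div_le_one (by positivity)]
              have : (0 : ℝ) ≤ n := by positivity
              linarith
            rw [abs_lt] at h3
            have : |y| ≤ 3 := abs_le.2 ⟨by linarith [h3.1], by linarith [h3.2]⟩
            linarith
          have : (m : ℝ) ≤ n := by exact_mod_cast hmn
          gcongr
      intro x
      by_cases hx : ∃ n, leftEnd L n < x ∧ x < leftEnd L (n + 1)
      · obtain ⟨n, hn1, hn2⟩ := hx
        refine ⟨whipCurve n (x - (leftEnd L n + L n)) 1, fun y hy => ?_⟩
        rcases hmem x y hy with h | ⟨k, h1, h2, h3⟩
        · linarith [leftEnd_nonneg hL n, h.1]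
        · have hkn : k = n := by
            rcases lt_trichotomy k n with h | h | h
            · linarith [leftEnd_mono hL (Nat.succ_le_of_lt h)]
            · exact h
            · linarith [leftEnd_mono hL (Nat.succ_le_of_lt h)]
          subst hkn
          rw [abs_lt] at h3
          constructor <;> linarith [h3.1, h3.2]
      · push Not at hx
        refine ⟨0, fun y hy => ?_⟩
        have hm0 : 0 < 1 / ((m : ℝ) + 1) := by positivity
        rcases hmem x y hy with h | ⟨k, h1, h2, h3⟩
        · constructor <;> linarith [h.2.1, h.2.2]
        · have hw : whipCurve k (x - (leftEnd L k + L k)) 1 = 0 := by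
            apply whip_zero
            rw [le_abs]
            rcases h1.eq_or_lt with h | h
            · right; linarith [hL k]
            · left
              have := hx k h
              rw [leftEnd_succ] at this
              linarith [hL k]
          rw [hw, abs_lt] at h3
          constructor <;> linarith [h3.1, h3.2]
    have lim : Tendsto (fun m : ℕ => ENNReal.ofReal (Λ.toReal / (1 + 1 / ((m : ℝ) + 1)) ^ p))
        atTop (𝓝 (ENNReal.ofReal (Λ.toReal / (1 + 0) ^ p))) := by
      apply ENNReal.tendsto_ofReal
      apply Filter.Tendsto.div tendsto_const_nhds
      · apply Filter.Tendsto.rpow_const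
        · exact tendsto_const_nhds.add tendsto_one_div_add_atTop_nhds_zero_nat
        · left; norm_num
      · norm_num
    rw [add_zero, Real.one_rpow, div_one, ENNReal.ofReal_toReal hΛt] at lim
    exact le_of_tendsto' lim key

end Geometry

section MinMax

theorem norm_sum_disjoint {ι E : Type*} [Fintype ι] [NormedAddCommGroup E] [NormedSpace ℝ E]
    {p : ℝ} (hp : 0 < p) (c : ι → ℝ) (f : ι → E) (hf : ∀ i j, i ≠ j → f i = 0 ∨ f j = 0) :
    ‖∑ i, c i • f i‖ ^ p = ∑ i, |c i| ^ p * ‖f i‖ ^ p := by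
  by_cases h : ∃ i, f i ≠ 0
  · obtain ⟨i, hi⟩ := h
    have hj : ∀ j, j ≠ i → f j = 0 := fun j hji => (hf j i hji).resolve_right hi
    rw [Finset.sum_eq_single i (fun j _ hji => by rw [hj j hji, smul_zero]) (by simp),
      Finset.sum_eq_single i (fun j _ hji => by rw [hj j hji, norm_zero, Real.zero_rpow hp.ne',
        mul_zero]) (by simp), norm_smul, Real.mul_rpow (norm_nonneg _) (norm_nonneg _),
      Real.norm_eq_abs]
  · push Not at h
    simp [h, Real.zero_rpow hp.ne']

theorem coeFn_comb {ι E : Type*} [NormedAddCommGroup E] [NormedSpace ℝ E] {N : ℕ} {q : ℝ≥0∞}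
    (w : ι → Lp E q (volume : Measure (EucN N))) (f : ι → EucN N → E)
    (h : ∀ i, ⇑(w i) =ᵐ[volume] f i) (c : ι → ℝ) (s : Finset ι) :
    ⇑(∑ i ∈ s, c i • w i) =ᵐ[volume] fun x => ∑ i ∈ s, c i • f i x := by
  classical
  induction s using Finset.induction_on with
  | empty =>
    simp only [Finset.sum_empty]
    exact Lp.coeFn_zero _ _ _
  | insert a s ha ih =>
    rw [Finset.sum_insert ha]
    filter_upwards [Lp.coeFn_add (c a • w a) (∑ i ∈ s, c i • w i), Lp.coeFn_smul (c a) (w a), ih,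
      h a] with x h1 h2 h3 h4
    rw [h1, Pi.add_apply, h2, Pi.smul_apply, h3, h4, Finset.sum_insert ha]

/-- odd power -/
def oddPow (p t : ℝ) : ℝ := (max t 0) ^ (1 / p) - (max (-t) 0) ^ (1 / p)

theorem oddPow_neg (p t : ℝ) : oddPow p (-t) = - oddPow p t := by
  unfold oddPow; rw [neg_neg]; ring

theorem oddPow_abs {p : ℝ} (hp : 0 < p) (t : ℝ) : |oddPow p t| ^ p = |t| := by
  have hp' : (1 / p) ≠ 0 := by positivity
  have key : ∀ s : ℝ, 0 ≤ s → |s ^ (1 / p)| ^ p = s := by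
    intro s hs
    rw [abs_of_nonneg (Real.rpow_nonneg hs _), ← Real.rpow_mul hs, one_div_mul_cancel hp.ne',
      Real.rpow_one]
  unfold oddPow
  rcases le_total 0 t with h | h
  · rw [max_eq_left h, max_eq_right (by linarith), Real.zero_rpow hp', sub_zero, key t h,
      abs_of_nonneg h]
  · rw [max_eq_right h, max_eq_left (by linarith), Real.zero_rpow hp', zero_sub, abs_neg,
      key (-t) (by linarith), abs_of_nonpos h]

theorem continuous_oddPow {p : ℝ} (hp : 0 < p) : Continuous (oddPow p) := by
  unfold oddPow
  have hp' : 0 ≤ 1 / p := by positivity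
  exact ((continuous_id.max continuous_const).rpow_const (fun _ => Or.inr hp')).sub
    ((continuous_neg.max continuous_const).rpow_const (fun _ => Or.inr hp'))

theorem test_comb {N k : ℕ} {Ω : Set (EucN N)} {ψ : Fin k → EucN N → ℝ}
    (h : ∀ i, IsTestFun Ω (ψ i)) (c : Fin k → ℝ) :
    IsTestFun Ω (fun x => ∑ i, c i • ψ i x) := by
  apply isTest_of (K := ⋃ i, tsupport (ψ i))
  · exact ContDiff.sum (fun i _ => (contDiff_const (c := c i)).mul (h i).1)
  · exact isCompact_iUnion (fun i => (h i).2.1)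
  · exact iUnion_subset (fun i => (h i).2.2)
  · intro x hx
    obtain ⟨i, _, hi⟩ := Finset.exists_ne_zero_of_sum_ne_zero hx
    exact mem_iUnion.2 ⟨i, subset_tsupport _ (right_ne_zero_of_smul hi)⟩

theorem gradient_comb {N k : ℕ} {ψ : Fin k → EucN N → ℝ}
    (h : ∀ i, ContDiff ℝ (⊤ : ℕ∞) (ψ i)) (c : Fin k → ℝ) (x : EucN N) :
    gradient (fun x => ∑ i, c i • ψ i x) x = ∑ i, c i • gradient (ψ i) x := by
  unfold gradient
  have : fderiv ℝ (fun x => ∑ i, c i • ψ i x) x = ∑ i, c i • fderiv ℝ (ψ i) x := by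
    apply HasFDerivAt.fderiv
    apply HasFDerivAt.fun_sum
    intro i _
    exact ((h i).differentiable (by simp) x).hasFDerivAt.const_smul (c i)
  rw [this, map_sum]
  simp

theorem minmax {p : ℝ} (hp : 1 < p) {Ω : Set (EucN 2)} {k : ℕ} {E : ℝ}
    (ψ : Fin k → EucN 2 → ℝ) (ht : ∀ i, IsTestFun Ω (ψ i))
    (h1 : ∀ i, ∫ x, |ψ i x| ^ p = 1) (h2 : ∀ i, ∫ x, ‖gradient (ψ i) x‖ ^ p ≤ E)
    (hd : ∀ i j, i ≠ j → ∀ x, x ∈ tsupport (ψ i) → x ∉ tsupport (ψ j)) :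
    lambdaLS 2 p hp.le Ω k ≤ ENNReal.ofReal E := by
  have := fact_one_le_ofReal hp.le
  have hp0 : 0 < p := by linarith
  choose w hw1 hw2 using fun i => exists_pair p (ht i)
  set G : (Fin k → ℝ) → SobPair 2 (ENNReal.ofReal p) := fun a => ∑ i, oddPow p (a i) • w i with hG
  have hGc : Continuous G := by
    apply continuous_finsetSum
    intro i _
    exact ((continuous_oddPow hp0).comp (continuous_apply i)).smul continuous_const
  have hGn : ∀ a, G (-a) = - G a := by
    intro a
    simp only [hG, Pi.neg_apply, oddPow_neg, neg_smul, Finset.sum_neg_distrib]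
  have hr1 : ∀ a, ⇑(G a).1 =ᵐ[volume] fun x => ∑ i, oddPow p (a i) • ψ i x := by
    intro a
    have : (G a).1 = ∑ i, oddPow p (a i) • (w i).1 := by
      simp only [hG, Prod.fst_sum, Prod.smul_fst]
    rw [this]
    exact coeFn_comb _ _ hw1 _ _
  have hr2 : ∀ a, ⇑(G a).2 =ᵐ[volume] fun x => gradient (fun x => ∑ i, oddPow p (a i) • ψ i x) x := by
    intro a
    have : (G a).2 = ∑ i, oddPow p (a i) • (w i).2 := by
      simp only [hG, Prod.snd_sum, Prod.smul_snd]
    rw [this]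
    refine (coeFn_comb _ _ hw2 _ _).trans (ae_of_all _ fun x => ?_)
    exact (gradient_comb (fun i => (ht i).1) _ x).symm
  have hI : ∀ a, ∑ i, |a i| = 1 → ∫ x, |(G a).1 x| ^ p = 1 := by
    intro a ha
    rw [(rep_integral (hr1 a) (hr2 a)).1]
    have e : ∀ x, |∑ i, oddPow p (a i) • ψ i x| ^ p = ∑ i, |a i| * |ψ i x| ^ p := by
      intro x
      have := norm_sum_disjoint hp0 (fun i => oddPow p (a i)) (fun i => ψ i x) (fun i j hij => by
        by_contra! h
        exact hd i j hij x (subset_tsupport _ h.1) (subset_tsupport _ h.2))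
      simpa only [oddPow_abs hp0, Real.norm_eq_abs] using this
    simp only [e]
    have hi : ∀ i, Integrable (fun x => |a i| * |ψ i x| ^ p) := fun i =>
      (integrable_rpow (ht i).1.continuous (ht i).2.1 hp0).const_mul _
    rw [integral_finsetSum _ (fun i _ => hi i)]
    simp only [integral_const_mul]
    calc _ = ∑ i, |a i| := Finset.sum_congr rfl (fun i _ => by rw [h1 i, mul_one])
      _ = 1 := ha
  have hE : ∀ a, ∑ i, |a i| = 1 → ∫ x, ‖(G a).2 x‖ ^ p ≤ E := by
    intro a ha
    rw [(rep_integral (hr1 a) (hr2 a)).2]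
    have e : ∀ x, ‖gradient (fun x => ∑ i, oddPow p (a i) • ψ i x) x‖ ^ p
        = ∑ i, |a i| * ‖gradient (ψ i) x‖ ^ p := by
      intro x
      rw [gradient_comb (fun i => (ht i).1)]
      have := norm_sum_disjoint hp0 (fun i => oddPow p (a i)) (fun i => gradient (ψ i) x)
        (fun i j hij => by
        by_contra! h
        refine hd i j hij x ?_ ?_
        · by_contra h'; exact h.1 (gradient_zero_of h')
        · by_contra h'; exact h.2 (gradient_zero_of h'))
      simpa only [oddPow_abs hp0] using this
    simp only [e]
    rw [integral_finsetSum _ (fun i _ =>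
      (integrable_rpow (continuous_gradient (ht i).1) (hcs_gradient (ht i).2.1) hp0).const_mul _)]
    simp only [integral_const_mul]
    calc _ ≤ ∑ i, |a i| * E := Finset.sum_le_sum (fun i _ =>
            mul_le_mul_of_nonneg_left (h2 i) (abs_nonneg _))
      _ = E := by rw [← Finset.sum_mul, ha, one_mul]
  have hsph : IsCompact {a : Fin k → ℝ | ∑ i, |a i| = 1} := by
    apply Metric.isCompact_of_isClosed_isBounded
    · exact isClosed_eq (by fun_prop) continuous_const
    · apply isBounded_closedBall (x := (0 : Fin k → ℝ)) (r := 1) |>.subset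
      intro a ha
      rw [mem_closedBall_zero_iff, pi_norm_le_iff_of_nonneg zero_le_one]
      intro i
      have ha : ∑ i, |a i| = 1 := ha
      rw [← ha]
      exact Finset.single_le_sum (f := fun i => |a i|) (fun j _ => abs_nonneg _) (Finset.mem_univ i)
  have hK : G '' {a | ∑ i, |a i| = 1} ∈ SobClass 2 p hp.le Ω k := by
    refine ⟨?_, ?_, ?_, hsph.image hGc, ?_⟩
    · rintro _ ⟨a, ha, rfl⟩
      apply subset_closure
      exact ⟨_, test_comb ht (fun i => oddPow p (a i)), hr1 a, hr2 a⟩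
    · rintro _ ⟨a, ha, rfl⟩
      exact hI a ha
    · rintro _ ⟨a, ha, rfl⟩
      refine ⟨-a, ?_, hGn a⟩
      have ha : ∑ i, |a i| = 1 := ha
      simpa using ha
    · rintro j ⟨f, hf1, hf2, hf3⟩
      apply BU.borsuk_ulam k j (f ∘ G)
      · exact hf1.comp hGc.continuousOn (mapsTo_image _ _)
      · intro a ha
        exact hf2 _ ⟨a, ha, rfl⟩
      · intro a ha
        simp only [Function.comp, hGn]
        exact hf3 _ ⟨a, ha, rfl⟩
  refine (iInf₂_le _ hK).trans (iSup₂_le ?_)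
  rintro _ ⟨a, ha, rfl⟩
  exact ENNReal.ofReal_le_ofReal (hE a ha)

theorem gradient_comp_sub {N : ℕ} (ψ : EucN N → ℝ) (v x : EucN N) :
    gradient (fun x => ψ (x - v)) x = gradient ψ (x - v) := by
  unfold gradient
  rw [fderiv_comp_sub]

theorem part2 {p : ℝ} (hp : 1 < p) {B : ℕ → Set (EucN 2)} {L : ℕ → ℝ}
    (hL : ∀ n, Real.pi < L n)
    (hsmall : ∀ n, lambda1p 2 p hp.le (B n ∩ {q : EucN 2 | q 0 ∈ Ioo (-(L n)) (L n)}) <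
      lambda1p 1 p hp.le {x : EucN 1 | x 0 ∈ Ioo (-(1/2) : ℝ) (1/2)}) (k : ℕ) (hk : k ≠ 0) :
    lambdaLS 2 p hp.le (chainSet B L) k <
      lambda1p 1 p hp.le {x : EucN 1 | x 0 ∈ Ioo (-(1/2) : ℝ) (1/2)} := by
  have hp0 : 0 < p := by linarith
  set Λ := lambda1p 1 p hp.le {x : EucN 1 | x 0 ∈ Ioo (-(1/2) : ℝ) (1/2)} with hΛ
  have hΛt : Λ ≠ ⊤ := lambda1_ne_top hp
  have step : ∀ n : ℕ, ∃ ψ, IsTestFun (chainSet B L) ψ ∧ ∫ x, |ψ x| ^ p = 1 ∧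
      ∫ x, ‖gradient ψ x‖ ^ p < Λ.toReal ∧
      ∀ x ∈ tsupport ψ, leftEnd L n < x 0 ∧ x 0 < leftEnd L (n + 1) := by
    intro n
    have hs := hsmall n
    rw [← ENNReal.ofReal_toReal hΛt] at hs
    obtain ⟨ψ, ht, h1, h2⟩ := exists_test_lt hp hs
    set v : EucN 2 := (2 * (∑ i ∈ Finset.range n, L i) + L n) • pt2 1 0 with hv
    have hv0 : v 0 = leftEnd L n + L n := by simp [hv, pt2_0, leftEnd]
    have hcK : IsCompact ((fun q => q + v) '' tsupport ψ) :=
      IsCompact.image ht.2.1 (by fun_prop)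
    have hsup : ∀ x, ψ (x - v) ≠ 0 → x ∈ (fun q => q + v) '' tsupport ψ :=
      fun x hx => ⟨x - v, subset_tsupport _ hx, sub_add_cancel x v⟩
    refine ⟨fun x => ψ (x - v), ?_, ?_, ?_, ?_⟩
    · apply isTest_of (ht.1.comp (contDiff_id.sub contDiff_const)) hcK _ hsup
      rintro _ ⟨q, hq, rfl⟩
      right
      refine mem_iUnion.2 ⟨n, q, ⟨(ht.2.2 hq).1, Ioo_subset_Icc_self (ht.2.2 hq).2⟩, rfl⟩
    · rw [integral_sub_right_eq_self (fun x => |ψ x| ^ p) v, h1]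
    · simp only [gradient_comp_sub]
      rw [integral_sub_right_eq_self (fun x => ‖gradient ψ x‖ ^ p) v]
      exact h2
    · intro x hx
      obtain ⟨q, hq, rfl⟩ := closure_minimal (s := Function.support fun x => ψ (x - v)) hsup
        hcK.isClosed hx
      have h3 : q 0 ∈ Ioo (-(L n)) (L n) := (ht.2.2 hq).2
      have : (q + v) 0 = q 0 + (leftEnd L n + L n) := by rw [PiLp.add_apply, hv0]
      rw [this, leftEnd_succ]
      constructor <;> linarith [h3.1, h3.2]
  choose ψ ht h1 h2 h3 using step
  have : Nonempty (Fin k) := ⟨⟨0, Nat.pos_of_ne_zero hk⟩⟩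
  obtain ⟨i0, hi0⟩ := Finite.exists_max (fun i : Fin k => ∫ x, ‖gradient (ψ i) x‖ ^ p)
  have hm := minmax hp (E := ∫ x, ‖gradient (ψ i0) x‖ ^ p) (fun i : Fin k => ψ i) (fun i => ht i) (fun i => h1 i) hi0
    (by
      intro i j hij x hx hx'
      have a1 := h3 i x hx
      have a2 := h3 j x hx'
      have hij' : (i : ℕ) ≠ j := fun h => hij (Fin.ext h)
      rcases lt_or_gt_of_ne hij' with h | h
      · linarith [leftEnd_mono hL (Nat.succ_le_of_lt h)]
      · linarith [leftEnd_mono hL (Nat.succ_le_of_lt h)])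
  refine hm.trans_lt ?_
  rw [← ENNReal.ofReal_toReal hΛt]
  apply (ENNReal.ofReal_lt_ofReal_iff_of_nonneg (integral_nonneg (fun x => by positivity))).2
  exact h2 i0

end MinMax

theorem statement16 (p : ℝ) (hp1 : 1 < p)
    (Γ Γ' ν : ℕ → ℝ → EucN 2) (φ : ℕ → ℝ → ℝ)
    (hΓ0 : ∀ n, Γ n 0 = whipCurve n 0)
    (hφ : ∀ n, StrictMono (φ n) ∧ φ n 0 = 0 ∧ Function.Surjective (φ n))
    (hrepar : ∀ n s, Γ n s = whipCurve n (φ n s))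
    (hderiv : ∀ n s, HasDerivAt (Γ n) (Γ' n s) s)
    (hunit : ∀ n s, ‖Γ' n s‖ = 1)
    (hν : ∀ n s, ‖ν n s‖ = 1 ∧ ⟪ν n s, Γ' n s⟫ = 0)
    (L : ℕ → ℝ) (hL : ∀ n, Real.pi < L n)
    (hsmall : ∀ n, lambda1p 2 p hp1.le
        ({q | ∃ s t : ℝ, t ∈ Ioo (-(1/2) : ℝ) (1/2) ∧ q = Γ n s + t • ν n s} ∩
          {q : EucN 2 | q 0 ∈ Ioo (-(L n)) (L n)}) <
      lambda1p 1 p hp1.le {x : EucN 1 | x 0 ∈ Ioo (-(1/2) : ℝ) (1/2)}) :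
    Einfty 2 p hp1.le
        ({q : EucN 2 | q 0 < 0 ∧ q 1 ∈ Ioo (-(1/2) : ℝ) (1/2)} ∪
          ⋃ n : ℕ, (fun q => q + (2 * (∑ i ∈ Finset.range n, L i) + L n) • pt2 1 0) ''
            ({q | ∃ s t : ℝ, t ∈ Ioo (-(1/2) : ℝ) (1/2) ∧ q = Γ n s + t • ν n s} ∩
              {q : EucN 2 | q 0 ∈ Icc (-(L n)) (L n)})) =
      lambda1p 1 p hp1.le {x : EucN 1 | x 0 ∈ Ioo (-(1/2) : ℝ) (1/2)} ∧
    ∀ k : ℕ, k ≠ 0 →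
      lambdaLS 2 p hp1.le
          ({q : EucN 2 | q 0 < 0 ∧ q 1 ∈ Ioo (-(1/2) : ℝ) (1/2)} ∪
            ⋃ n : ℕ, (fun q => q + (2 * (∑ i ∈ Finset.range n, L i) + L n) • pt2 1 0) ''
              ({q | ∃ s t : ℝ, t ∈ Ioo (-(1/2) : ℝ) (1/2) ∧ q = Γ n s + t • ν n s} ∩
                {q : EucN 2 | q 0 ∈ Icc (-(L n)) (L n)})) k <
        lambda1p 1 p hp1.le {x : EucN 1 | x 0 ∈ Ioo (-(1/2) : ℝ) (1/2)} := by
  have hB : ∀ n, ∀ q ∈ {q | ∃ s t : ℝ, t ∈ Ioo (-(1/2) : ℝ) (1/2) ∧ q = Γ n s + t • ν n s},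
      |q 1 - whipCurve n (q 0) 1| < (1 + 1 / ((n : ℝ) + 1)) / 2 := by
    rintro n q ⟨s, t, ht, hq⟩
    rw [hrepar] at hq
    exact tube_bound ht (hν n s).1 hq
  exact ⟨part1 hp1 hL hB, part2 hp1 hL hsmall⟩

end
end

section
/- Let Ω ⊆ ℝ^N be an open set and suppose there exists k ∈ ℕ\{0} such that λ_{k,2}^{LS}(Ω) < E(Ω), where E(Ω) := sup_{R>0} λ_1(Ω \ closure(B_R)). Then for every ℓ ∈ {1,…,k} one has λ_{ℓ,2}^{LS}(Ω) = λ_ℓ(Ω), where λ_ℓ(Ω) is the ℓ-th Courant–Fischer minmax value λ_ℓ(Ω) := inf{ max_{u ∈ K ∩ S_2(Ω)} ∫_Ω |∇u|^2 dx : K ⊆ W^{1,2}_0(Ω) a linear subspace with dim K = ℓ }. -/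
open MeasureTheory Filter Topology Metric Set ENNReal
open scoped RealInnerProductSpace

noncomputable section

/-- The `ℓ`-th Courant–Fischer minmax value for the Dirichlet Laplacian (`p = 2`). -/
noncomputable def courantFischer (N : ℕ) (Ω : Set (EucN N)) (ℓ : ℕ) : ℝ≥0∞ :=
  letI := fact_one_le_ofReal (by norm_num : (1 : ℝ) ≤ 2)
  ⨅ K ∈ {K : Submodule ℝ (SobPair N (ENNReal.ofReal 2)) |
      (K : Set (SobPair N (ENNReal.ofReal 2))) ⊆ W10 N 2 (by norm_num) Ω ∧
        Module.finrank ℝ K = ℓ},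
    ⨆ w ∈ {w | w ∈ (K : Set (SobPair N (ENNReal.ofReal 2))) ∧
      (∫ x, |w.1 x| ^ (2 : ℝ)) = 1},
      ENNReal.ofReal (∫ x, ‖w.2 x‖ ^ (2 : ℝ))


/-! ### Odd nonvanishing maps -/

/-- A continuous odd map, nonvanishing away from the origin. -/
def OddNV (n m : ℕ) : Prop :=
  ∃ f : (Fin n → ℝ) → (Fin m → ℝ), Continuous f ∧ (∀ x, f (-x) = -f x) ∧ ∀ x, x ≠ 0 → f x ≠ 0

theorem OddNV.comp {a b c : ℕ} (h : OddNV a b) (h' : OddNV b c) : OddNV a c := by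
  obtain ⟨f, hf, hfo, hf0⟩ := h
  obtain ⟨g, hg, hgo, hg0⟩ := h'
  exact ⟨g ∘ f, hg.comp hf, fun x => by simp [hfo, hgo], fun x hx => hg0 _ (hf0 _ hx)⟩

theorem OddNV.susp {a b : ℕ} (h : OddNV a b) : OddNV (a + 1) (b + 1) := by
  obtain ⟨f, hf, hfo, hf0⟩ := h
  refine ⟨fun x => Fin.cons (x 0) (f (fun i => x i.succ)), ?_, ?_, ?_⟩
  · refine continuous_pi fun i => ?_
    refine Fin.cases ?_ (fun i => ?_) i
    · simpa using continuous_apply 0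
    · simp only [Fin.cons_succ]
      exact (continuous_apply i).comp (hf.comp (by fun_prop))
  · intro x
    funext i
    refine Fin.cases ?_ (fun i => ?_) i
    · simp
    · have := congrFun (hfo (fun i => x i.succ)) i
      simpa [Pi.neg_def] using this
  · intro x hx h0
    have h1 : x 0 = 0 := by simpa using congrFun h0 0
    have h2 : f (fun i => x i.succ) = 0 := by
      funext i
      simpa using congrFun h0 i.succ
    apply hx
    have h3 : (fun i : Fin a => x i.succ) = 0 := by
      by_contra h
      exact hf0 _ h h2
    funext i
    refine Fin.cases ?_ (fun i => ?_) i
    · exact h1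
    · exact congrFun h3 i

theorem OddNV.incl {a b : ℕ} (h : a ≤ b) : OddNV a b := by
  refine ⟨fun x i => if hi : (i : ℕ) < a then x ⟨i, hi⟩ else 0, ?_, ?_, ?_⟩
  · refine continuous_pi fun i => ?_
    split_ifs
    · exact continuous_apply _
    · exact continuous_const
  · intro x
    funext i
    simp only [Pi.neg_apply]
    split_ifs <;> simp
  · intro x hx h0
    apply hx
    funext i
    have := congrFun h0 ⟨i, lt_of_lt_of_le i.2 h⟩
    simpa using this

/-- Failure of Borsuk-Ulam in one dimension would collapse all spheres. -/
theorem OddNV.collapse {a b : ℕ} (hba : b < a) (h : OddNV a b) (m : ℕ) : OddNV m b := by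
  have h1 : OddNV (b + 1) b := (OddNV.incl hba).comp h
  induction m with
  | zero => exact OddNV.incl (Nat.zero_le _)
  | succ m ih => exact ih.susp.comp h1

theorem hasOdd_of_nonvanishing {Z : Type*} [NormedAddCommGroup Z] {A : Set Z} {j : ℕ}
    (f : Z → (Fin j → ℝ)) (hf : ContinuousOn f A) (h0 : ∀ x ∈ A, f x ≠ 0)
    (ho : ∀ x ∈ A, f (-x) = -f x) : HasOddMapToSphere A j := by
  refine ⟨fun x => (‖WithLp.toLp 2 (f x)‖)⁻¹ • WithLp.toLp 2 (f x), ?_, ?_, ?_⟩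
  · have h1 : ContinuousOn (fun x => WithLp.toLp 2 (f x)) A :=
      (PiLp.continuous_toLp 2 _).comp_continuousOn hf
    refine ContinuousOn.smul (ContinuousOn.inv₀ h1.norm ?_) h1
    intro x hx
    have := h0 x hx
    simpa using this
  · intro x hx
    have h1 : ‖WithLp.toLp 2 (f x)‖ ≠ 0 := by
      have := h0 x hx
      simpa using this
    rw [norm_smul, norm_inv, norm_norm, inv_mul_cancel₀ h1]
  · intro x hx
    simp [ho x hx]

/-- Linear functionals separate a compact set from the origin. -/
theorem exists_linear_nonvanishing {Z : Type*} [NormedAddCommGroup Z] [NormedSpace ℝ Z]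
    {A : Set Z} (hA : IsCompact A) (h0 : ∀ x ∈ A, x ≠ 0) :
    ∃ (m : ℕ) (L : Z →L[ℝ] (Fin m → ℝ)), ∀ x ∈ A, L x ≠ 0 := by
  have h1 : ∀ x : Z, x ≠ 0 → ∃ g : Z →L[ℝ] ℝ, g x ≠ 0 := by
    intro x hx
    obtain ⟨g, _, hg⟩ := exists_dual_vector ℝ x (norm_ne_zero_iff.2 hx)
    exact ⟨g, by rw [hg]; simpa using hx⟩
  obtain ⟨t, ht⟩ := hA.elim_finite_subcover (fun g : Z →L[ℝ] ℝ => {x | g x ≠ 0})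
    (fun g => isOpen_ne_fun g.continuous continuous_const) (by
      intro x hx
      obtain ⟨g, hg⟩ := h1 x (h0 x hx)
      exact mem_iUnion.2 ⟨g, hg⟩)
  refine ⟨t.card, ContinuousLinearMap.pi fun i => (t.equivFin.symm i : Z →L[ℝ] ℝ), ?_⟩
  intro x hx hL
  obtain ⟨g, hg⟩ := mem_iUnion.1 (ht hx)
  obtain ⟨hgt, hgx⟩ := mem_iUnion.1 hg
  apply hgx
  have := congrFun hL (t.equivFin ⟨g, hgt⟩)
  simpa using this

theorem oddNV_genus {Z : Type*} [NormedAddCommGroup Z] [NormedSpace ℝ Z]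
    {A : Set Z} (hA : IsCompact A) (h0 : ∀ x ∈ A, x ≠ 0) {k a b : ℕ} (hg : genusGE A k)
    (hba : b < a) (h : OddNV a b) : k ≤ b := by
  obtain ⟨m, L, hL⟩ := exists_linear_nonvanishing hA h0
  obtain ⟨f, hf, hfo, hf0⟩ := h.collapse hba m
  apply hg
  refine hasOdd_of_nonvanishing (fun x => f (L x)) (hf.comp L.continuous).continuousOn
    (fun x hx => hf0 _ (hL x hx)) (fun x _ => by simp [hfo])

/-- Homogeneous extension of an odd map defined on a sphere. -/
theorem oddNV_of_sphere {n j : ℕ} (f : (Fin n → ℝ) → EuclideanSpace ℝ (Fin j))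
    (hf : ContinuousOn f {0}ᶜ) (h1 : ∀ x, x ≠ 0 → ‖f x‖ = 1)
    (ho : ∀ x, x ≠ 0 → f (-x) = -f x) : OddNV n j := by
  refine ⟨fun x => WithLp.ofLp (‖x‖ • f x), ?_, ?_, ?_⟩
  · refine (PiLp.continuous_ofLp 2 _).comp ?_
    rw [continuous_iff_continuousAt]
    intro x
    by_cases hx : x = 0
    · subst hx
      rw [ContinuousAt, norm_zero, zero_smul, tendsto_zero_iff_norm_tendsto_zero]
      refine squeeze_zero (fun _ => norm_nonneg _) (g := fun x => ‖x‖) ?_ ?_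
      · intro x
        by_cases hx : x = 0
        · simp [hx]
        · simp [norm_smul, h1 x hx]
      · simpa using (continuous_norm (E := Fin n → ℝ)).tendsto 0
    · exact continuous_norm.continuousAt.smul
        (hf.continuousAt (isOpen_compl_singleton.mem_nhds hx))
  · intro x
    by_cases hx : x = 0
    · simp [hx]
    · simp [ho x hx]
  · intro x hx h
    have h2 : ‖x‖ • f x = 0 := (WithLp.ofLp_eq_zero 2).1 h
    have h3 := congrArg norm h2
    rw [norm_smul, h1 x hx] at h3
    simp at h3
    exact hx h3

/-! ### The quadratic forms -/

theorem exists_form {X : Type*} [MeasurableSpace X] (μ : Measure X) {E : Type*}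
    [NormedAddCommGroup E] [InnerProductSpace ℝ E] (q : ℝ≥0∞) [Fact (1 ≤ q)] (hq : q = 2) :
    ∃ B : Lp E q μ →L[ℝ] Lp E q μ →L[ℝ] ℝ, (∀ u v, B u v = B v u) ∧
      (∀ u v, B u v = ∫ x, ⟪u x, v x⟫ ∂μ) ∧ (∀ u, B u u = ∫ x, ‖u x‖ ^ (2 : ℝ) ∂μ) ∧
      (∀ u, B u u = ‖u‖ ^ 2) := by
  subst hq
  refine ⟨innerSL ℝ, fun u v => ?_, fun u v => ?_, fun u => ?_, fun u => ?_⟩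
  · exact real_inner_comm (F := Lp E 2 μ) v u
  · exact L2.inner_def (𝕜 := ℝ) u v
  · refine (L2.inner_def (𝕜 := ℝ) u u).trans ?_
    simp
  · exact real_inner_self_eq_norm_sq (F := Lp E 2 μ) u

/-! ### The space `W10` is a closed subspace, and the first component determines the pair -/

theorem gradient_add_smul {N : ℕ} {f g : EucN N → ℝ} (c : ℝ) {x : EucN N}
    (hf : DifferentiableAt ℝ f x) (hg : DifferentiableAt ℝ g x) :
    gradient (fun y => c * f y + g y) x = c • gradient f x + gradient g x := by
  refine ext_inner_right ℝ fun y => ?_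
  rw [inner_add_left, inner_smul_left, inner_gradient_left, inner_gradient_left,
    inner_gradient_left]
  rw [fderiv_fun_add (hf.const_mul c) hg, fderiv_const_mul hf]
  simp

theorem isTestPair_zero {N : ℕ} (q : ℝ≥0∞) (Ω : Set (EucN N)) :
    IsTestPair q Ω (0 : SobPair N q) := by
  refine ⟨0, ⟨contDiff_zero_fun, HasCompactSupport.zero, by simp [tsupport]⟩, ?_, ?_⟩
  · exact Lp.coeFn_zero _ _ _
  · filter_upwards [Lp.coeFn_zero (EucN N) q (volume : Measure (EucN N))] with x hx
    have : gradient (0 : EucN N → ℝ) x = 0 := gradient_fun_const x (0 : ℝ)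
    rw [this]
    exact hx

theorem isTestPair_add_smul {N : ℕ} (q : ℝ≥0∞) (Ω : Set (EucN N)) (c : ℝ)
    {v w : SobPair N q} (hv : IsTestPair q Ω v) (hw : IsTestPair q Ω w) :
    IsTestPair q Ω (c • v + w) := by
  obtain ⟨f, ⟨f1, f2, f3⟩, f4, f5⟩ := hv
  obtain ⟨g, ⟨g1, g2, g3⟩, g4, g5⟩ := hw
  have hs : tsupport (fun y => c * f y + g y) ⊆ tsupport f ∪ tsupport g := by
    refine closure_minimal ?_ ((isClosed_tsupport f).union (isClosed_tsupport g))
    intro x hx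
    by_contra h
    rw [mem_union, not_or] at h
    apply hx
    simp [image_eq_zero_of_notMem_tsupport h.1, image_eq_zero_of_notMem_tsupport h.2]
  refine ⟨fun y => c * f y + g y, ⟨(contDiff_const.mul f1).add g1, ?_, ?_⟩, ?_, ?_⟩
  · exact (f2.isCompact.union g2.isCompact).of_isClosed_subset (isClosed_tsupport _) hs
  · exact hs.trans (union_subset f3 g3)
  · filter_upwards [Lp.coeFn_add (c • v.1) w.1, Lp.coeFn_smul c v.1, f4, g4] with x h1 h2 h3 h4
    change (c • v.1 + w.1 : Lp ℝ q _) x = _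
    rw [h1, Pi.add_apply, h2, Pi.smul_apply, h3, h4, smul_eq_mul]
  · filter_upwards [Lp.coeFn_add (c • v.2) w.2, Lp.coeFn_smul c v.2, f5, g5] with x h1 h2 h3 h4
    change (c • v.2 + w.2 : Lp (EucN N) q _) x = _
    rw [h1, Pi.add_apply, h2, Pi.smul_apply, h3, h4, gradient_add_smul c
      (f1.differentiable (by simp) x) (g1.differentiable (by simp) x)]

/-- `W10` as a submodule. -/
theorem exists_submodule (N : ℕ) (p : ℝ) (hp : 1 ≤ p) (Ω : Set (EucN N)) :
    ∃ S : Submodule ℝ (SobPair N (ENNReal.ofReal p)),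
      (S : Set (SobPair N (ENNReal.ofReal p))) = W10 N p hp Ω := by
  have := fact_one_le_ofReal hp
  let S0 : Submodule ℝ (SobPair N (ENNReal.ofReal p)) :=
    { carrier := {w | IsTestPair (ENNReal.ofReal p) Ω w}
      zero_mem' := isTestPair_zero _ _
      add_mem' := fun {a b} ha hb => by
        have := isTestPair_add_smul _ Ω 1 ha hb
        rwa [one_smul] at this
      smul_mem' := fun c a ha => by
        have := isTestPair_add_smul _ Ω c ha (isTestPair_zero _ _)
        rwa [add_zero] at this }
  exact ⟨S0.topologicalClosure, rfl⟩

theorem W10_closable (N : ℕ) (hp : (1 : ℝ) ≤ 2) (Ω : Set (EucN N))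
    (w : SobPair N (ENNReal.ofReal 2)) (hw : w ∈ W10 N 2 hp Ω) (h1 : w.1 = 0) : w = 0 := by
  have := fact_one_le_ofReal hp
  have h2 : ENNReal.ofReal 2 = 2 := by simp
  obtain ⟨B, _, hB, _, _⟩ := exists_form (volume : Measure (EucN N)) (E := ℝ) _ h2
  obtain ⟨C, _, hC, _, _⟩ := exists_form (volume : Measure (EucN N)) (E := EucN N) _ h2
  -- integration by parts
  have key : ∀ (e : EucN N) (φ : EucN N → ℝ), ContDiff ℝ (⊤ : ℕ∞) φ → HasCompactSupport φ →
      ∫ x, ⟪w.2 x, φ x • e⟫ = 0 := by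
    intro e φ hφ hφc
    have hdφ : Continuous (fun x => fderiv ℝ φ x e) :=
      (hφ.continuous_fderiv (by simp)).clm_apply continuous_const
    have hdφc : HasCompactSupport (fun x => fderiv ℝ φ x e) := hφc.fderiv_apply ℝ e
    have m1 : MemLp (fun x => φ x • e) (ENNReal.ofReal 2) (volume : Measure (EucN N)) :=
      (hφ.continuous.smul continuous_const).memLp_of_hasCompactSupport (hφc.smul_right)
    have m2 : MemLp (fun x => fderiv ℝ φ x e) (ENNReal.ofReal 2) (volume : Measure (EucN N)) :=
      hdφ.memLp_of_hasCompactSupport hdφc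
    have hcl : IsClosed {v : SobPair N (ENNReal.ofReal 2) |
        C v.2 (m1.toLp _) + B v.1 (m2.toLp _) = 0} := by
      refine isClosed_eq ?_ continuous_const
      fun_prop
    have hsub : {v | IsTestPair (ENNReal.ofReal 2) Ω v} ⊆ {v : SobPair N (ENNReal.ofReal 2) |
        C v.2 (m1.toLp _) + B v.1 (m2.toLp _) = 0} := by
      rintro v ⟨ψ, ⟨p1, p2, p3⟩, p4, p5⟩
      have hdψ : Continuous (fun x => fderiv ℝ ψ x e) :=
        (p1.continuous_fderiv (by simp)).clm_apply continuous_const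
      have e1 : C v.2 (m1.toLp _) = ∫ x, fderiv ℝ ψ x e * φ x := by
        rw [hC]
        refine integral_congr_ae ?_
        filter_upwards [p5, m1.coeFn_toLp] with x hx hy
        rw [hx, hy, inner_smul_right, inner_gradient_left, mul_comm]
      have e2 : B v.1 (m2.toLp _) = ∫ x, ψ x * fderiv ℝ φ x e := by
        rw [hB]
        refine integral_congr_ae ?_
        filter_upwards [p4, m2.coeFn_toLp] with x hx hy
        rw [hx, hy]
        simp [mul_comm]
      have e3 : ∫ x, ψ x * fderiv ℝ φ x e = - ∫ x, fderiv ℝ ψ x e * φ x := by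
        apply integral_mul_fderiv_eq_neg_fderiv_mul_of_integrable
        · exact (hdψ.mul hφ.continuous).integrable_of_hasCompactSupport hφc.mul_left
        · exact (p1.continuous.mul hdφ).integrable_of_hasCompactSupport hdφc.mul_left
        · exact (p1.continuous.mul hφ.continuous).integrable_of_hasCompactSupport hφc.mul_left
        · exact fun x _ => p1.differentiable (by simp) x
        · exact fun x _ => hφ.differentiable (by simp) x
      change _ = _
      rw [e1, e2, e3]
      ring
    have h3 : C w.2 (m1.toLp _) + B w.1 (m2.toLp _) = 0 := closure_minimal hsub hcl hw
    rw [h1, map_zero, zero_apply, add_zero, hC] at h3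
    rw [← h3]
    refine integral_congr_ae ?_
    filter_upwards [m1.coeFn_toLp] with x hy
    rw [hy]
  have hint : LocallyIntegrable (w.2 : EucN N → EucN N) volume :=
    (Lp.memLp w.2).locallyIntegrable (Fact.out)
  have hz : ∀ᵐ x, w.2 x = 0 := by
    refine ae_eq_zero_of_integral_contDiff_smul_eq_zero hint ?_
    intro φ hφ hφc
    have hi : Integrable (fun x => φ x • w.2 x) volume :=
      hint.integrable_smul_left_of_hasCompactSupport hφ.continuous hφc
    refine ext_inner_left ℝ fun e => ?_
    rw [← integral_inner hi, inner_zero_right, ← key e φ hφ hφc]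
    congr 1
    funext x
    rw [inner_smul_right, inner_smul_right, real_inner_comm]
  refine Prod.ext h1 ?_
  refine Lp.ext ?_
  filter_upwards [hz, Lp.coeFn_zero (EucN N) (ENNReal.ofReal 2) (volume : Measure (EucN N))]
    with x hx hy
  change w.2 x = (0 : Lp (EucN N) (ENNReal.ofReal 2) _) x
  rw [hx, hy]
  rfl

/-! ### Sylvester-type argument -/

theorem exists_orthogonal {Z : Type*} [NormedAddCommGroup Z] [NormedSpace ℝ Z]
    (Q : Z →L[ℝ] Z →L[ℝ] ℝ) (hQ : ∀ x y, Q x y = Q y x) {A : Set Z} {l : ℕ}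
    (hg : genusGE A l) (d : ℕ) (hd : d ≤ l) :
    ∃ x : Fin d → Z, (∀ i, x i ∈ A) ∧ ∀ i j, i ≠ j → Q (x i) (x j) = 0 := by
  induction d with
  | zero => exact ⟨Fin.elim0, fun i => i.elim0, fun i => i.elim0⟩
  | succ d ih =>
    obtain ⟨x, hx, hxo⟩ := ih (by omega)
    have : ∃ y ∈ A, ∀ i, Q (x i) y = 0 := by
      by_contra hcon
      push Not at hcon
      have : l ≤ d := by
        apply hg
        refine hasOdd_of_nonvanishing (fun y i => Q (x i) y) ?_ ?_ ?_
        · refine Continuous.continuousOn ?_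
          fun_prop
        · intro y hy h0
          obtain ⟨i, hi⟩ := hcon y hy
          exact hi (congrFun h0 i)
        · intro y _
          funext i
          simp
      omega
    obtain ⟨y, hy, hyo⟩ := this
    refine ⟨Fin.cons y x, ?_, ?_⟩
    · intro i
      refine Fin.cases ?_ (fun i => ?_) i
      · simpa using hy
      · simpa using hx i
    · intro i j
      refine Fin.cases ?_ (fun i => ?_) i <;> refine Fin.cases ?_ (fun j => ?_) j
      · simp
      · intro _
        simp only [Fin.cons_zero, Fin.cons_succ]
        rw [hQ, hyo]
      · intro _
        simp only [Fin.cons_zero, Fin.cons_succ]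
        rw [hyo]
      · intro hij
        simp only [Fin.cons_succ]
        exact hxo i j (fun h => hij (by rw [h]))

theorem exists_negative_subspace {Z : Type*} [NormedAddCommGroup Z] [NormedSpace ℝ Z]
    (Q : Z →L[ℝ] Z →L[ℝ] ℝ) (hQ : ∀ x y, Q x y = Q y x) {A : Set Z} {l : ℕ}
    (hg : genusGE A l) (hneg : ∀ x ∈ A, Q x x < 0) :
    ∃ V : Submodule ℝ Z, V ≤ Submodule.span ℝ A ∧ Module.finrank ℝ V = l ∧
      ∀ x ∈ V, Q x x ≤ 0 := by
  obtain ⟨x, hx, hxo⟩ := exists_orthogonal Q hQ hg l le_rfl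
  have hs : ∀ (c : Fin l → ℝ) (j : Fin l), Q (x j) (∑ i, c i • x i) = c j * Q (x j) (x j) := by
    intro c j
    rw [map_sum, Finset.sum_eq_single j]
    · simp
    · intro i _ hij
      rw [map_smul, hxo j i hij.symm, smul_zero]
    · simp
  have hli : LinearIndependent ℝ x := by
    rw [Fintype.linearIndependent_iff]
    intro c hc j
    have := hs c j
    rw [hc, map_zero] at this
    rcases mul_eq_zero.1 this.symm with h | h
    · exact h
    · exact absurd h (hneg _ (hx j)).ne
  refine ⟨Submodule.span ℝ (Set.range x), ?_, ?_, ?_⟩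
  · apply Submodule.span_mono
    rintro _ ⟨i, rfl⟩
    exact hx i
  · rw [finrank_span_eq_card hli, Fintype.card_fin]
  · intro y hy
    obtain ⟨c, rfl⟩ := (Submodule.mem_span_range_iff_exists_fun ℝ).1 hy
    have : Q (∑ i, c i • x i) (∑ i, c i • x i) = ∑ j, c j ^ 2 * Q (x j) (x j) := by
      rw [map_sum (Q (∑ i, c i • x i))]
      refine Finset.sum_congr rfl fun j _ => ?_
      rw [map_smul, hQ, hs, smul_eq_mul]
      ring
    rw [this]
    exact Finset.sum_nonpos fun j _ =>
      mul_nonpos_of_nonneg_of_nonpos (sq_nonneg _) (hneg _ (hx j)).le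

theorem courantFischer_le (N : ℕ) (Ω : Set (EucN N)) (l : ℕ) :
    courantFischer N Ω l ≤ lambdaLS N 2 one_le_two Ω l := by
  have := fact_one_le_ofReal (one_le_two (α := ℝ))
  have h2 : ENNReal.ofReal 2 = 2 := by simp
  obtain ⟨B, hBs, _, hB, _⟩ := exists_form (volume : Measure (EucN N)) (E := ℝ) _ h2
  obtain ⟨C, hCs, _, hC, _⟩ := exists_form (volume : Measure (EucN N)) (E := EucN N) _ h2
  obtain ⟨S, hS⟩ := exists_submodule N 2 one_le_two Ω
  refine le_iInf₂ fun K hK => ?_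
  obtain ⟨hK1, hK2, hK3, hK4, hK5⟩ := hK
  refine le_of_forall_gt_imp_ge_of_dense fun c hc => ?_
  by_cases hct : c = ⊤
  · rw [hct]; exact le_top
  lift c to NNReal using hct
  let m : ℝ := NNReal.toReal c
  let P1 := ContinuousLinearMap.fst ℝ (Lp ℝ (ENNReal.ofReal 2) (volume : Measure (EucN N)))
    (Lp (EucN N) (ENNReal.ofReal 2) (volume : Measure (EucN N)))
  let P2 := ContinuousLinearMap.snd ℝ (Lp ℝ (ENNReal.ofReal 2) (volume : Measure (EucN N)))
    (Lp (EucN N) (ENNReal.ofReal 2) (volume : Measure (EucN N)))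
  let Q : SobPair N (ENNReal.ofReal 2) →L[ℝ] SobPair N (ENNReal.ofReal 2) →L[ℝ] ℝ :=
    C.bilinearComp P2 P2 - m • B.bilinearComp P1 P1
  have hQ : ∀ x y, Q x y = C x.2 y.2 - m * B x.1 y.1 := fun x y => rfl
  obtain ⟨V, hV1, hV2, hV3⟩ := exists_negative_subspace Q
    (fun x y => by rw [hQ, hQ, hBs, hCs]) hK5 (by
      intro w hw
      have h1 : ENNReal.ofReal (∫ x, ‖w.2 x‖ ^ (2 : ℝ)) < (c : ℝ≥0∞) :=
        lt_of_le_of_lt (le_iSup₂ (f := fun (w : SobPair N (ENNReal.ofReal 2)) (_ : w ∈ K) =>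
          ENNReal.ofReal (∫ x, ‖w.2 x‖ ^ (2 : ℝ))) w hw) hc
      rw [← ENNReal.ofReal_coe_nnreal] at h1
      have h3 : (∫ x, ‖w.2 x‖ ^ (2 : ℝ)) < m := (ENNReal.ofReal_lt_ofReal_iff').1 h1 |>.1
      have h4 : (∫ x, ‖w.1 x‖ ^ (2 : ℝ)) = 1 := hK2 w hw
      rw [hQ, hC, hB, h4]
      linarith)
  have hVS : V ≤ S := hV1.trans (Submodule.span_le.2 (by rw [hS]; exact hK1))
  have hVW : (V : Set (SobPair N (ENNReal.ofReal 2))) ⊆ W10 N 2 one_le_two Ω := by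
    rw [← hS]; exact hVS
  refine (iInf₂_le V ⟨hVW, hV2⟩).trans ?_
  · refine iSup₂_le fun w hw => ?_
    obtain ⟨hw1, hw2⟩ := hw
    have h3 := hV3 w hw1
    have h4 : (∫ x, ‖w.1 x‖ ^ (2 : ℝ)) = 1 := hw2
    rw [hQ, hC, hB, h4] at h3
    rw [← ENNReal.ofReal_coe_nnreal]
    exact ENNReal.ofReal_le_ofReal (by linarith)

/-! ### Finite-dimensional spheres have large genus -/

theorem lambdaLS_le (N : ℕ) (Ω : Set (EucN N)) (k l : ℕ) (hlpos : 1 ≤ l) (hl : l ≤ k)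
    (K₀ : Set (SobPair N (ENNReal.ofReal 2))) (hK₀ : K₀ ∈ SobClass N 2 one_le_two Ω k) :
    lambdaLS N 2 one_le_two Ω l ≤ courantFischer N Ω l := by
  have := fact_one_le_ofReal (one_le_two (α := ℝ))
  have h2 : ENNReal.ofReal 2 = 2 := by simp
  obtain ⟨B, _, _, hB, hB'⟩ := exists_form (volume : Measure (EucN N)) (E := ℝ) _ h2
  have hnorm : ∀ w : SobPair N (ENNReal.ofReal 2),
      (∫ x, |w.1 x| ^ (2 : ℝ)) = ‖w.1‖ ^ 2 := fun w => by
    rw [← hB', hB]; rfl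
  refine le_iInf₂ fun V hV => ?_
  obtain ⟨hV1, hV2⟩ := hV
  obtain ⟨hK1, hK2, hK3, hK4, hK5⟩ := hK₀
  refine iInf₂_le {w | w ∈ (V : Set (SobPair N (ENNReal.ofReal 2))) ∧
      (∫ x, |w.1 x| ^ (2 : ℝ)) = 1} ?_
  have hfd : FiniteDimensional ℝ V := FiniteDimensional.of_finrank_pos (by omega)
  let b : Module.Basis (Fin l) ℝ V := Module.finBasisOfFinrankEq ℝ V hV2
  let T₀ : (Fin l → ℝ) ≃ₗ[ℝ] V := b.equivFun.symm
  let T : (Fin l → ℝ) →ₗ[ℝ] SobPair N (ENNReal.ofReal 2) := V.subtype ∘ₗ T₀.toLinearMap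
  have hTc : Continuous T := T.continuous_of_finiteDimensional
  have hTV : ∀ x, T x ∈ V := fun x => (T₀ x).2
  have hT0 : ∀ x, x ≠ 0 → ‖(T x).1‖ ≠ 0 := by
    intro x hx h
    have h1 : T x = 0 := W10_closable N one_le_two Ω _ (hV1 (hTV x)) (norm_eq_zero.1 h)
    have h3 : T₀ x = 0 := Subtype.ext h1
    exact hx (by simpa using h3)
  let F : (Fin l → ℝ) → SobPair N (ENNReal.ofReal 2) := fun x => ‖(T x).1‖⁻¹ • T x
  have hFc : ContinuousOn F {0}ᶜ := by
    refine ContinuousOn.smul (ContinuousOn.inv₀ ?_ fun x hx => hT0 x hx) hTc.continuousOn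
    exact (hTc.fst.norm).continuousOn
  have hF1 : ∀ x, x ≠ 0 → F x ∈ V ∧ (∫ y, |(F x).1 y| ^ (2 : ℝ)) = 1 := by
    intro x hx
    refine ⟨V.smul_mem _ (hTV x), ?_⟩
    rw [hnorm]
    change ‖‖(T x).1‖⁻¹ • (T x).1‖ ^ 2 = 1
    rw [norm_smul, norm_inv, norm_norm, inv_mul_cancel₀ (hT0 x hx), one_pow]
  have hFo : ∀ x, F (-x) = - F x := by
    intro x
    change ‖(T (-x)).1‖⁻¹ • T (-x) = -(‖(T x).1‖⁻¹ • T x)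
    rw [map_neg, smul_neg, Prod.fst_neg, norm_neg]
  have himg : {w | w ∈ (V : Set (SobPair N (ENNReal.ofReal 2))) ∧
      (∫ x, |w.1 x| ^ (2 : ℝ)) = 1} = F '' (sphere 0 1) := by
    ext w
    constructor
    · rintro ⟨hwV, hw1⟩
      let y := T₀.symm ⟨w, hwV⟩
      have hTy : T y = w := by
        change ((T₀ (T₀.symm ⟨w, hwV⟩) : V) : SobPair N (ENNReal.ofReal 2)) = w
        rw [LinearEquiv.apply_symm_apply]
      have hw1' : ‖w.1‖ = 1 := by
        rw [hnorm] at hw1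
        exact (pow_eq_one_iff_of_nonneg (norm_nonneg _) two_ne_zero).1 hw1
      have hy : y ≠ 0 := by
        intro h
        rw [h, map_zero] at hTy
        rw [← hTy] at hw1'
        simp at hw1'
      have hyn : ‖y‖ ≠ 0 := norm_ne_zero_iff.2 hy
      refine ⟨‖y‖⁻¹ • y, ?_, ?_⟩
      · simp [norm_smul, hyn]
      · change ‖(T (‖y‖⁻¹ • y)).1‖⁻¹ • T (‖y‖⁻¹ • y) = w
        rw [map_smul, hTy, Prod.smul_fst, norm_smul, hw1', norm_inv, norm_norm, mul_one,
          inv_inv, smul_smul, mul_inv_cancel₀ hyn, one_smul]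
    · rintro ⟨x, hx, rfl⟩
      exact hF1 x (ne_zero_of_mem_unit_sphere (⟨x, hx⟩ : sphere (0 : Fin l → ℝ) 1))
  refine ⟨fun w hw => hV1 hw.1, fun w hw => hw.2, ?_, ?_, ?_⟩
  · rintro w ⟨hw1, hw2⟩
    refine ⟨V.neg_mem hw1, ?_⟩
    rw [hnorm] at hw2 ⊢
    rwa [Prod.fst_neg, norm_neg]
  · rw [himg]
    refine (isCompact_sphere 0 1).image_of_continuousOn (hFc.mono ?_)
    intro x hx
    exact ne_zero_of_mem_unit_sphere (⟨x, hx⟩ : sphere (0 : Fin l → ℝ) 1)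
  · rintro j ⟨f, hf, hf1, hfo⟩
    by_contra hj
    have hod : OddNV l j := by
      refine oddNV_of_sphere (fun x => f (F x)) ?_ ?_ ?_
      · exact hf.comp hFc fun x hx => hF1 x hx
      · exact fun x hx => hf1 _ (hF1 x hx)
      · intro x hx
        rw [hFo]
        exact hfo _ (hF1 x hx)
    have := oddNV_genus hK4 (fun w hw h => by
      have := hK2 w hw
      rw [hnorm, h] at this
      simp at this) hK5 (by omega) hod
    omega

theorem statement19 (N : ℕ) (Ω : Set (EucN N)) (hΩ : IsOpen Ω)
    (k : ℕ) (hk : k ≠ 0)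
    (hlt : lambdaLS N 2 one_le_two Ω k < Einfty N 2 one_le_two Ω) :
    ∀ ℓ : ℕ, 1 ≤ ℓ → ℓ ≤ k →
      lambdaLS N 2 one_le_two Ω ℓ = courantFischer N Ω ℓ := by
  have _ := hΩ
  have _ := hk
  intro l h1 h2
  have hfin : lambdaLS N 2 one_le_two Ω k < ⊤ := lt_of_lt_of_le hlt le_top
  obtain ⟨K, hK⟩ := iInf_lt_iff.1 hfin
  obtain ⟨hK, _⟩ := iInf_lt_iff.1 hK
  exact le_antisymm (lambdaLS_le N Ω k l h1 h2 K hK) (courantFischer_le N Ω l)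

end
end
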